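/- arXiv:1502.03740 — 3 statements merged into one kernel-verified Lean document; each statement's English description precedes it below -/
import Mathlib

section
/- Let I, J ⊆ ℝ be intervals, E a Banach space, y : J → E locally essentially bounded and Bochner measurable, and f : I → ℝ locally absolutely continuous with f(I) ⊆ J. Then the function t ↦ f'(t) · y(f(t)) is locally Bochner integrable on I, and for all s, t ∈ I, ∫_s^t f'(λ) y(f(λ)) dλ = ∫_{f(s)}^{f(t)} y(λ) dλ. -/
open MeasureTheory Set intervalIntegral

/-- `f` is absolutely continuous on the set `s`: for every `ε > 0` there is `δ > 0` such
that for every finite family of non-overlapping subintervals of `s` of total length `< δ`,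
the total variation of `f` over them is `< ε`. -/
def AbsolutelyContinuousOn (f : ℝ → ℝ) (s : Set ℝ) : Prop :=
  ∀ ε > (0 : ℝ), ∃ δ > (0 : ℝ), ∀ n : ℕ, ∀ u v : ℕ → ℝ,
    (∀ i < n, u i ∈ s ∧ v i ∈ s ∧ u i ≤ v i) →
    (∀ i < n, ∀ j < n, i ≠ j → Set.Ioo (u i) (v i) ∩ Set.Ioo (u j) (v j) = ∅) →
    (∑ i ∈ Finset.range n, (v i - u i)) < δ →
    (∑ i ∈ Finset.range n, |f (v i) - f (u i)|) < ε

/-- `f` is locally absolutely continuous on the interval `I`: absolutely continuous on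
every compact subinterval of `I`. -/
def LocallyAbsolutelyContinuousOn (f : ℝ → ℝ) (I : Set ℝ) : Prop :=
  ∀ a ∈ I, ∀ b ∈ I, AbsolutelyContinuousOn f (Set.Icc a b)

/-- `f'` is the derivative of `f` relative to `I`, in the convention of the paper:
it is the derivative at points of differentiability and `0` elsewhere. -/
def IsDerivWithinOf (f' f : ℝ → ℝ) (I : Set ℝ) : Prop :=
  ∀ t ∈ I, (DifferentiableWithinAt ℝ f I t → HasDerivWithinAt f (f' t) I t) ∧
    (¬ DifferentiableWithinAt ℝ f I t → f' t = 0)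

/-- `y ∈ L^∞_loc(J; E)`: `y` is Bochner measurable on `J` and essentially bounded on
every compact subinterval of `J`. -/
def LocEssBdd {E : Type*} [NormedAddCommGroup E] (y : ℝ → E) (J : Set ℝ) : Prop :=
  AEStronglyMeasurable y (volume.restrict J) ∧
  ∀ a ∈ J, ∀ b ∈ J, ∃ M : ℝ, ∀ᵐ t ∂(volume.restrict (Set.uIcc a b)), ‖y t‖ ≤ M

open Filter Topology in
theorem null_aux (f : ℝ → ℝ) (N : Set ℝ) (hN : volume N = 0) :
    volume {t | DifferentiableAt ℝ f t ∧ deriv f t ≠ 0 ∧ f t ∈ N} = 0 := by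
  set s := {t | DifferentiableAt ℝ f t ∧ deriv f t ≠ 0 ∧ f t ∈ N} with hs
  have key : ∀ A : ℝ →L[ℝ] ℝ, ∃ r : NNReal, r ≠ 0 ∧ (A.det ≠ 0 → ∀ (u : Set ℝ) (h : ℝ → ℝ),
      ApproximatesLinearOn h A u r → volume (h '' u) = 0 → volume u = 0) := by
    intro A
    by_cases hA : A.det = 0
    · exact ⟨1, one_ne_zero, fun h => absurd hA h⟩
    have hm : ((Real.toNNReal (|A.det| / 2) : NNReal) : ENNReal) < ENNReal.ofReal |A.det| := by
      have : 0 < |A.det| := abs_pos.2 hA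
      exact (ENNReal.ofReal_lt_ofReal_iff this).2 (by linarith)
    obtain ⟨r, hr, hr0⟩ := ((mul_le_addHaar_image_of_lt_det volume A hm).and
      self_mem_nhdsWithin).exists
    refine ⟨r, (ne_of_gt hr0), fun _ u h hu h0 => ?_⟩
    have h1 := hr u h hu
    rw [h0] at h1
    have h2 := le_antisymm h1 (zero_le)
    rcases mul_eq_zero.1 h2 with h3 | h3
    · exfalso
      have : 0 < |A.det| := abs_pos.2 hA
      rw [ENNReal.coe_eq_zero, Real.toNNReal_eq_zero] at h3
      linarith
    · exact h3
  choose r hr0 hr using key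
  obtain ⟨t, A, -, hcov, happ, hne⟩ := exists_closed_cover_approximatesLinearOn_of_hasFDerivWithinAt
    f s (fun x => ContinuousLinearMap.toSpanSingleton ℝ (deriv f x))
    (fun x hx => hx.1.hasDerivAt.hasFDerivAt.hasFDerivWithinAt) r hr0
  rcases s.eq_empty_or_nonempty with h | h
  · rw [h]; simp
  have : s = ⋃ n, s ∩ t n := by rw [← inter_iUnion]; exact (inter_eq_left.2 hcov).symm
  rw [this, measure_iUnion_null_iff]
  intro n
  refine hr (A n) ?_ _ f (happ n) (measure_mono_null ?_ hN)
  · obtain ⟨x, hx, hA⟩ := hne h n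
    rw [hA]
    simpa using hx.2.1
  · rintro _ ⟨x, hx, rfl⟩
    exact hx.1.2.2

theorem ac_aux {f : ℝ → ℝ} {a b : ℝ} (hab : a ≤ b) (hf : AbsolutelyContinuousOn f (Icc a b)) :
    AbsolutelyContinuousOnInterval f a b := by
  rw [absolutelyContinuousOnInterval_iff]
  intro ε hε
  obtain ⟨δ, hδ, h⟩ := hf ε hε
  refine ⟨δ, hδ, ?_⟩
  rintro ⟨n, E⟩ ⟨hE1, hE2⟩ hE3
  simp only [uIcc_of_le hab, Finset.mem_range] at hE1 hE2 hE3 ⊢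
  have := h n (fun i => min (E i).1 (E i).2) (fun i => max (E i).1 (E i).2) ?_ ?_ ?_
  · convert this using 2 with i hi
    rcases le_total (E i).1 (E i).2 with h | h
    · simp [h, Real.dist_eq, abs_sub_comm]
    · simp [h, Real.dist_eq]
  · intro i hi
    obtain ⟨h1, h2⟩ := hE1 i hi
    simp only [mem_Icc] at h1 h2 ⊢
    grind
  · intro i hi j hj hij
    have := hE2 (by simpa using hi) (by simpa using hj) hij
    exact (this.mono Ioo_subset_Ioc_self Ioo_subset_Ioc_self).inter_eq
  · convert hE3 using 2 with i hi
    rw [max_sub_min_eq_abs, Real.dist_eq, abs_sub_comm]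

theorem core_aux {E : Type*} [NormedAddCommGroup E] [NormedSpace ℝ E] [CompleteSpace E]
    {f : ℝ → ℝ} {a b : ℝ} (hf : AbsolutelyContinuousOnInterval f a b)
    {g : ℝ → E} (hg : StronglyMeasurable g) {M : NNReal} (hM : ∀ u, ‖g u‖ ≤ M) :
    IntervalIntegrable (fun τ => deriv f τ • g (f τ)) volume a b ∧
    (∫ τ in a..b, deriv f τ • g (f τ)) = ∫ u in f a..f b, g u := by
  have hgL : LocallyIntegrable g volume := by
    intro x
    refine ⟨Metric.ball x 1, Metric.ball_mem_nhds x one_pos, ?_⟩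
    exact Measure.integrableOn_of_bounded (M := M) (by simp) hg.aestronglyMeasurable
      (Filter.Eventually.of_forall hM)
  have hgI : ∀ u v, IntervalIntegrable g volume u v := fun u v =>
    intervalIntegrable_iff.2 ((hgL.integrableOn_isCompact isCompact_uIcc).mono_set uIoc_subset_uIcc)
  set F : ℝ → E := fun u => ∫ x in (0:ℝ)..u, g x with hF
  have hFsub : ∀ u v, F v - F u = ∫ x in u..v, g x := fun u v =>
    intervalIntegral.integral_interval_sub_left (hgI _ _) (hgI _ _)
  have hFlip : ∀ u v, ‖F v - F u‖ ≤ M * |v - u| := fun u v => by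
    rw [hFsub]
    exact intervalIntegral.norm_integral_le_of_norm_le_const (fun x _ => hM x)
  have hInt : IntervalIntegrable (fun τ => deriv f τ • g (f τ)) volume a b := by
    have h1 := hf.intervalIntegrable_deriv
    rw [intervalIntegrable_iff] at h1 ⊢
    have hfm : AEMeasurable f (volume.restrict (uIoc a b)) :=
      (hf.continuousOn.mono uIoc_subset_uIcc).aemeasurable measurableSet_uIoc
    refine Integrable.mono' (h1.norm.mul_const (M : ℝ)) ?_ ?_
    · exact h1.aestronglyMeasurable.smul (hg.aestronglyMeasurable.comp_aemeasurable hfm)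
    · refine Filter.Eventually.of_forall fun x => ?_
      rw [norm_smul]
      gcongr
      exact hM _
  refine ⟨hInt, ?_⟩
  set N : Set ℝ := {u | ¬ HasDerivAt F (g u) u} with hNdef
  have hN : volume N = 0 := by
    have := LocallyIntegrable.ae_hasDerivAt_integral hgL
    rw [← ae_iff]
    filter_upwards [this] with x hx
    exact hx 0
  have hder : ∀ᵐ x, x ∈ uIcc a b → HasDerivAt (fun τ => F (f τ)) (deriv f x • g (f x)) x := by
    filter_upwards [hf.ae_differentiableAt, measure_eq_zero_iff_ae_notMem.1 (null_aux f N hN)]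
      with x hx1 hx2 hx
    have hd := (hx1 hx).hasDerivAt
    by_cases h : f x ∈ N
    · have h0 : deriv f x = 0 := by
        by_contra h0
        exact hx2 ⟨hx1 hx, h0, h⟩
      rw [h0] at hd ⊢
      rw [zero_smul]
      rw [hasDerivAt_iff_isLittleO] at hd ⊢
      simp only [smul_zero, sub_zero] at hd ⊢
      refine Asymptotics.IsBigO.trans_isLittleO ?_ hd
      refine Asymptotics.IsBigO.of_bound M (Filter.Eventually.of_forall fun z => ?_)
      exact hFlip _ _
    · have h' : HasDerivAt F (g (f x)) (f x) := by simpa [N] using h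
      exact h'.scomp x hd
  rw [← hFsub]
  rw [SeparatingDual.eq_iff_forall_dual_eq (R := ℝ)]
  intro φ
  have hac : AbsolutelyContinuousOnInterval (fun τ => φ (F (f τ))) a b := by
    refine squeeze_zero (fun t => Finset.sum_nonneg fun i _ => dist_nonneg) (fun t => ?_)
      (by simpa using Filter.Tendsto.const_mul (‖φ‖ * M) hf)
    rw [Finset.mul_sum]
    gcongr with i hi
    rw [dist_eq_norm, ← map_sub, mul_assoc]
    refine (φ.le_opNorm _).trans ?_
    gcongr
    exact hFlip _ _
  have h2 := hac.integral_deriv_eq_sub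
  rw [map_sub, ← h2, ← ContinuousLinearMap.intervalIntegral_comp_comm φ hInt]
  refine intervalIntegral.integral_congr_ae ?_
  filter_upwards [hder] with x hx hx'
  exact ((φ.hasFDerivAt.comp_hasDerivAt x (hx (uIoc_subset_uIcc hx'))).deriv).symm

theorem main_aux {E : Type*} [NormedAddCommGroup E] [NormedSpace ℝ E] [CompleteSpace E]
    (I J : Set ℝ) (hI : I.OrdConnected) (hJ : J.OrdConnected)
    (y : ℝ → E) (hy : LocEssBdd y J)
    (f f' : ℝ → ℝ) (hf : LocallyAbsolutelyContinuousOn f I)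
    (hf' : IsDerivWithinOf f' f I) (hfIJ : f '' I ⊆ J) (a b : ℝ) (ha : a ∈ I) (hb : b ∈ I)
    (hab : a ≤ b) :
    IntervalIntegrable (fun τ => f' τ • y (f τ)) volume a b ∧
    (∫ τ in a..b, f' τ • y (f τ)) = ∫ u in f a..f b, y u := by
  have hac := ac_aux hab (hf a ha b hb)
  have hcont := hac.continuousOn
  have hsub : uIcc a b ⊆ I := hI.uIcc_subset ha hb
  obtain ⟨p, hp, hpm⟩ := isCompact_uIcc.exists_isMinOn nonempty_uIcc hcont
  obtain ⟨q, hq, hqm⟩ := isCompact_uIcc.exists_isMaxOn nonempty_uIcc hcont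
  have hc : f p ∈ J := hfIJ ⟨p, hsub hp, rfl⟩
  have hd : f q ∈ J := hfIJ ⟨q, hsub hq, rfl⟩
  have hpq : f p ≤ f q := hpm hq
  have him : ∀ x ∈ uIcc a b, f x ∈ uIcc (f p) (f q) := fun x hx => by
    rw [uIcc_of_le hpq]; exact ⟨hpm hx, hqm hx⟩
  set K := uIcc (f p) (f q) with hK
  have hKJ : K ⊆ J := hJ.uIcc_subset hc hd
  obtain ⟨M, hM⟩ := hy.2 _ hc _ hd
  have hyK : AEStronglyMeasurable y (volume.restrict K) := hy.1.mono_set hKJ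
  set y0 := hyK.mk y
  have hy0 : StronglyMeasurable y0 := hyK.stronglyMeasurable_mk
  set g : ℝ → E := {u | ‖y0 u‖ ≤ M}.indicator y0 with hgdef
  have hg : StronglyMeasurable g :=
    hy0.indicator (measurableSet_le hy0.norm.measurable measurable_const)
  have hgM : ∀ u, ‖g u‖ ≤ (Real.toNNReal M : NNReal) := by
    intro u
    by_cases h : ‖y0 u‖ ≤ M
    · have : g u = y0 u := indicator_of_mem (s := {u | ‖y0 u‖ ≤ M}) h y0
      rw [this]; exact h.trans (Real.le_coe_toNNReal M)
    · have : g u = 0 := indicator_of_notMem (s := {u | ‖y0 u‖ ≤ M}) h y0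
      rw [this]; simp
  have hyg : ∀ᵐ u, u ∈ K → y u = g u := by
    rw [← ae_restrict_iff' measurableSet_uIcc]
    filter_upwards [hM, hyK.ae_eq_mk] with u h1 h2
    have h3 : ‖y0 u‖ ≤ M := by
      have h4 : y u = y0 u := h2
      rw [← h4]; exact h1
    have : g u = y0 u := indicator_of_mem (s := {u | ‖y0 u‖ ≤ M}) h3 y0
    rw [this]; exact h2
  obtain ⟨h1, h2⟩ := core_aux hac hg hgM
  have hae : ∀ᵐ x, x ∈ uIoc a b → deriv f x • g (f x) = f' x • y (f x) := by
    have hb' : ∀ᵐ x : ℝ, x ≠ b := by simp [ae_iff, measure_singleton]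
    filter_upwards [hac.ae_differentiableAt, hb',
      measure_eq_zero_iff_ae_notMem.1 (null_aux f _ (ae_iff.1 hyg))] with x hx1 hxb hx2 hx
    have hxu := uIoc_subset_uIcc hx
    have hdx := hx1 hxu
    have hnh : I ∈ nhds x := by
      rw [uIoc_of_le hab] at hx
      refine Filter.mem_of_superset (Icc_mem_nhds hx.1 (lt_of_le_of_ne hx.2 hxb)) ?_
      rw [← uIcc_of_le hab]; exact hsub
    have h3 : f' x = deriv f x :=
      ((((hf' x (hsub hxu)).1 hdx.differentiableWithinAt).hasDerivAt hnh).deriv).symm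
    rw [h3]
    by_cases h0 : deriv f x = 0
    · simp [h0]
    · have : y (f x) = g (f x) := by
        by_contra h4
        exact hx2 ⟨hdx, h0, fun h5 => h4 (h5 (him x hxu))⟩
      rw [this]
  constructor
  · exact h1.congr_ae ((ae_restrict_iff' measurableSet_uIoc).2 hae)
  · rw [← intervalIntegral.integral_congr_ae hae, h2]
    refine intervalIntegral.integral_congr_ae ?_
    filter_upwards [hyg] with u hu hu'
    refine (hu ?_).symm
    exact (uIcc_subset_uIcc (him a left_mem_uIcc) (him b right_mem_uIcc)) (uIoc_subset_uIcc hu')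

/-- change of variables for the Bochner integral. If
`y ∈ L^∞_loc(J; E)` and `f ∈ AC_loc(I)` with `f(I) ⊆ J`, then `f'·(y ∘ f)` is locally
Bochner integrable on `I` and `∫_s^t f'·(y ∘ f) dλ = ∫_{f(s)}^{f(t)} y dλ`. -/
theorem stmt2 {E : Type*} [NormedAddCommGroup E] [NormedSpace ℝ E] [CompleteSpace E]
    (I J : Set ℝ) (hI : I.OrdConnected) (hJ : J.OrdConnected)
    (y : ℝ → E) (hy : LocEssBdd y J)
    (f f' : ℝ → ℝ) (hf : LocallyAbsolutelyContinuousOn f I)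
    (hf' : IsDerivWithinOf f' f I) (hfIJ : f '' I ⊆ J) :
    (∀ a ∈ I, ∀ b ∈ I, IntervalIntegrable (fun τ => f' τ • y (f τ)) volume a b) ∧
    ∀ s ∈ I, ∀ t ∈ I, (∫ τ in s..t, f' τ • y (f τ)) = ∫ u in f s..f t, y u := by
  have H := main_aux I J hI hJ y hy f f' hf hf' hfIJ
  constructor
  · intro a ha b hb
    rcases le_total a b with h | h
    · exact (H a b ha hb h).1
    · exact (H b a hb ha h).1.symm
  · intro a ha b hb
    rcases le_total a b with h | h
    · exact (H a b ha hb h).2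
    · rw [intervalIntegral.integral_symm, (H b a hb ha h).2, ← intervalIntegral.integral_symm]
end

section
/- Let I ⊆ ℝ be an interval, E a Banach space, A₁, A₂ : I → End(E) locally Bochner integrable, and X₁, X₂ evolution operators for A₁, A₂ in E. Suppose N > 0, ν₁ ∈ ℝ, ε ∈ {+1, −1}, and ‖X₁(t, s)^ε‖ ≤ N e^{−ν₁(t−s)} for all s ≤ t in I. Then for all s ≤ t in I: ‖X₂(t, s)^ε‖ ≤ N e^{−ν₁(t−s)} e^{N ∫_s^t ‖A₂ − A₁‖ dλ} and ‖X₂(t, s)^ε − X₁(t, s)^ε‖ ≤ N e^{−ν₁(t−s)} (e^{N ∫_s^t ‖A₂ − A₁‖ dλ} − 1). -/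
open MeasureTheory Set intervalIntegral

/-- An evolution operator for `A` in `E` on the interval `I`: for each `s ∈ I`,
`X(·, s)` is a continuous operator solution of `X' = A ∘ X` with `X(s,s) = id`. -/
def IsEvolutionOperator {E : Type*} [NormedAddCommGroup E] [NormedSpace ℝ E]
    (I : Set ℝ) (A : ℝ → E →L[ℝ] E) (X : ℝ → ℝ → E →L[ℝ] E) : Prop :=
  ∀ s ∈ I, ContinuousOn (fun t => X t s) I ∧ X s s = ContinuousLinearMap.id ℝ E ∧
    ∀ u ∈ I, ∀ t ∈ I, X t s - X u s = ∫ τ in u..t, (A τ).comp (X τ s)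

/-- `evPow X ε t s` is `X(t,s)^ε`: `X(t,s)` when `ε = +1` (`true`) and its inverse
`X(t,s)⁻¹ = X(s,t)` when `ε = −1` (`false`). -/
def evPow {E : Type*} [NormedAddCommGroup E] [NormedSpace ℝ E]
    (X : ℝ → ℝ → E →L[ℝ] E) (ε : Bool) (t s : ℝ) : E →L[ℝ] E :=
  if ε then X t s else X s t

theorem ac_of_dist_le {X Y Z : Type*} [PseudoMetricSpace X] [PseudoMetricSpace Y]
    [PseudoMetricSpace Z] {f : ℝ → X} {g : ℝ → Y} {h : ℝ → Z} {a b : ℝ} (C D : ℝ)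
    (hg : AbsolutelyContinuousOnInterval g a b) (hh : AbsolutelyContinuousOnInterval h a b)
    (H : ∀ x ∈ uIcc a b, ∀ y ∈ uIcc a b,
      dist (f x) (f y) ≤ C * dist (g x) (g y) + D * dist (h x) (h y)) :
    AbsolutelyContinuousOnInterval f a b := by
  unfold AbsolutelyContinuousOnInterval at hg hh ⊢
  apply squeeze_zero' ?_ ?_ (by simpa using (hg.const_mul C).add (hh.const_mul D))
  · exact Filter.Eventually.of_forall <| fun _ ↦ Finset.sum_nonneg (fun i hi ↦ dist_nonneg)
  rw [Filter.eventually_inf_principal]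
  filter_upwards with (n, I) hnI
  simp only [Finset.mul_sum, ← Finset.sum_add_distrib]
  refine Finset.sum_le_sum fun i hi => ?_
  exact H _ (hnI.left i hi).left _ (hnI.left i hi).right

theorem sub_prim {F : Type*} [NormedAddCommGroup F] [NormedSpace ℝ F]
    {f : ℝ → F} {a b x y : ℝ} (hf : IntervalIntegrable f volume a b)
    (hx : x ∈ uIcc a b) (hy : y ∈ uIcc a b) :
    (∫ τ in a..y, f τ) - (∫ τ in a..x, f τ) = ∫ τ in x..y, f τ := by
  apply intervalIntegral.integral_interval_sub_left
  · exact hf.mono_set (uIcc_subset_uIcc left_mem_uIcc hy)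
  · exact hf.mono_set (uIcc_subset_uIcc left_mem_uIcc hx)

theorem ac_prim {F : Type*} [NormedAddCommGroup F] [NormedSpace ℝ F]
    {f : ℝ → F} {a b : ℝ} (hf : IntervalIntegrable f volume a b) :
    AbsolutelyContinuousOnInterval (fun x => ∫ τ in a..x, f τ) a b := by
  have h := hf.norm.absolutelyContinuousOnInterval_intervalIntegral (c := a) left_mem_uIcc
  refine ac_of_dist_le 1 0 h h ?_
  intro x hx y hy
  rw [dist_comm, dist_eq_norm, dist_comm, dist_eq_norm, sub_prim hf hx hy, sub_prim hf.norm hx hy]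
  simpa using intervalIntegral.norm_integral_le_abs_integral_norm

theorem ac_ftc {F : Type*} [NormedAddCommGroup F] [NormedSpace ℝ F] [CompleteSpace F]
    {f f' : ℝ → F} {a b : ℝ} (hf : AbsolutelyContinuousOnInterval f a b)
    (hf' : IntervalIntegrable f' volume a b)
    (hd : ∀ᵐ x, x ∈ uIcc a b → HasDerivAt f (f' x) x) :
    f b - f a = ∫ τ in a..b, f' τ := by
  obtain ⟨C, hC⟩ := (hf.fun_sub (ac_prim hf')).const_of_ae_hasDerivAt_zero (by
    filter_upwards [hd, hf'.ae_hasDerivAt_integral] with x h1 h2 h3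
    simpa using (h1 h3).fun_sub (h2 h3 a left_mem_uIcc))
  have h1 := hC a left_mem_uIcc
  have h2 := hC b right_mem_uIcc
  simp only [intervalIntegral.integral_same, sub_zero] at h1
  rw [h1, ← h2]; abel

theorem prim_mul {R : Type*} [NormedRing R] [NormedAlgebra ℝ R] [CompleteSpace R]
    {f f' g g' : ℝ → R} {a b : ℝ}
    (hf' : IntervalIntegrable f' volume a b) (hg' : IntervalIntegrable g' volume a b)
    (hf : ∀ t ∈ uIcc a b, f t = f a + ∫ τ in a..t, f' τ)
    (hg : ∀ t ∈ uIcc a b, g t = g a + ∫ τ in a..t, g' τ) :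
    f b * g b - f a * g a = ∫ τ in a..b, (f' τ * g τ + f τ * g' τ) := by
  let F : ℝ → R := fun t => f a + ∫ τ in a..t, f' τ
  let G : ℝ → R := fun t => g a + ∫ τ in a..t, g' τ
  have hF : AbsolutelyContinuousOnInterval F a b :=
    ac_of_dist_le 1 0 (ac_prim hf') (ac_prim hf') (by intro x _ y _; simp [F])
  have hG : AbsolutelyContinuousOnInterval G a b :=
    ac_of_dist_le 1 0 (ac_prim hg') (ac_prim hg') (by intro x _ y _; simp [G])
  obtain ⟨C, hC⟩ := hF.exists_bound
  obtain ⟨D, hD⟩ := hG.exists_bound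
  have hFG : AbsolutelyContinuousOnInterval (fun t => F t * G t) a b := by
    refine ac_of_dist_le D C hF hG ?_
    intro x hx y hy
    rw [dist_eq_norm, dist_eq_norm, dist_eq_norm]
    have : F x * G x - F y * G y = (F x - F y) * G x + F y * (G x - G y) := by noncomm_ring
    rw [this]
    refine (norm_add_le _ _).trans (add_le_add ?_ ?_)
    · refine (norm_mul_le _ _).trans ?_
      rw [mul_comm]
      exact mul_le_mul_of_nonneg_right (hD x hx) (norm_nonneg _)
    · refine (norm_mul_le _ _).trans ?_
      exact mul_le_mul_of_nonneg_right (hC y hy) (norm_nonneg _)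
  have key := ac_ftc (f' := fun τ => f' τ * G τ + F τ * g' τ) hFG
    ((hf'.mul_continuousOn hG.continuousOn).add (hg'.continuousOn_mul hF.continuousOn)) (by
      filter_upwards [hf'.ae_hasDerivAt_integral, hg'.ae_hasDerivAt_integral] with x h1 h2 h3
      exact ((h1 h3 a left_mem_uIcc).const_add (f a)).fun_mul
        ((h2 h3 a left_mem_uIcc).const_add (g a)))
  have e : ∫ τ in a..b, (f' τ * g τ + f τ * g' τ) = ∫ τ in a..b, (f' τ * G τ + F τ * g' τ) := by
    apply intervalIntegral.integral_congr
    intro τ hτ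
    simp only [hf τ hτ, hg τ hτ, F, G]
  rw [e, ← key, hf b right_mem_uIcc, hg b right_mem_uIcc]
  simp [F, G]

theorem gron {u g : ℝ → ℝ} {a b c : ℝ} (hab : a ≤ b) (hg : IntervalIntegrable g volume a b)
    (hgu : IntervalIntegrable (fun x => g x * u x) volume a b) (hg0 : ∀ x, 0 ≤ g x)
    (H : ∀ t ∈ Icc a b, u t ≤ c + ∫ τ in a..t, g τ * u τ) :
    ∫ τ in a..b, g τ * u τ ≤ c * (Real.exp (∫ τ in a..b, g τ) - 1) := by
  have hm : AbsolutelyContinuousOnInterval (fun t => Real.exp (-∫ τ in a..t, g τ)) a b := by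
    refine ac_of_dist_le 1 0 (ac_prim hg) (ac_prim hg) ?_
    intro x hx y hy
    rw [uIcc_of_le hab] at hx hy
    have hx0 : 0 ≤ ∫ τ in a..x, g τ := intervalIntegral.integral_nonneg hx.1 fun t _ => hg0 t
    have hy0 : 0 ≤ ∫ τ in a..y, g τ := intervalIntegral.integral_nonneg hy.1 fun t _ => hg0 t
    generalize (∫ τ in a..x, g τ) = p at *
    generalize (∫ τ in a..y, g τ) = q at *
    have aux : ∀ p q : ℝ, 0 ≤ p → p ≤ q → Real.exp (-p) - Real.exp (-q) ≤ q - p := by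
      intro p q hp hpq
      have h1 : Real.exp (-p) ≤ 1 := Real.exp_le_one_iff.2 (by linarith)
      have h2 : Real.exp (-q) = Real.exp (-p) * Real.exp (p - q) := by
        rw [← Real.exp_add]; congr 1; ring
      have h3 := Real.add_one_le_exp (p - q)
      have h4 := Real.exp_pos (-p)
      rw [h2]
      nlinarith
    rw [Real.dist_eq, Real.dist_eq]
    rcases le_total p q with h | h
    · have h1 := aux p q hx0 h
      have h2 : Real.exp (-q) ≤ Real.exp (-p) := Real.exp_le_exp.2 (by linarith)
      rw [abs_of_nonneg (by linarith), abs_of_nonpos (by linarith)]; linarith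
    · have h1 := aux q p hy0 h
      have h2 : Real.exp (-p) ≤ Real.exp (-q) := Real.exp_le_exp.2 (by linarith)
      rw [abs_of_nonpos (by linarith), abs_of_nonneg (by linarith)]; linarith
  have hv : AbsolutelyContinuousOnInterval (fun t => c + ∫ τ in a..t, g τ * u τ) a b :=
    ac_of_dist_le 1 0 (ac_prim hgu) (ac_prim hgu) (by intro x _ y _; simp)
  have key := ac_ftc (f' := fun t => g t * u t * Real.exp (-∫ τ in a..t, g τ) +
      (c + ∫ τ in a..t, g τ * u τ) * (Real.exp (-∫ τ in a..t, g τ) * (-g t))) (hv.fun_mul hm)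
    ((hgu.mul_continuousOn hm.continuousOn).add
      ((hg.neg.continuousOn_mul hm.continuousOn).continuousOn_mul hv.continuousOn)) (by
      filter_upwards [hg.ae_hasDerivAt_integral, hgu.ae_hasDerivAt_integral] with x h1 h2 h3
      exact ((h2 h3 a left_mem_uIcc).const_add c).fun_mul (h1 h3 a left_mem_uIcc).fun_neg.exp)
  have hle : ∫ t in a..b, (g t * u t * Real.exp (-∫ τ in a..t, g τ) +
      (c + ∫ τ in a..t, g τ * u τ) * (Real.exp (-∫ τ in a..t, g τ) * (-g t))) ≤ 0 := by
    rw [← neg_nonneg, ← intervalIntegral.integral_neg]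
    refine intervalIntegral.integral_nonneg hab fun t ht => ?_
    have h1 := mul_nonneg (mul_nonneg (hg0 t) (Real.exp_pos (-∫ τ in a..t, g τ)).le)
      (sub_nonneg.2 (H t ht))
    linarith
  rw [← key] at hle
  simp only [intervalIntegral.integral_same, neg_zero, Real.exp_zero, add_zero, mul_one] at hle
  have hp := Real.exp_pos (∫ τ in a..b, g τ)
  have h5 := mul_le_mul_of_nonneg_right (sub_nonpos.1 hle) hp.le
  rw [mul_assoc, ← Real.exp_add, neg_add_cancel, Real.exp_zero] at h5
  linarith

theorem gron' {u g : ℝ → ℝ} {a b c : ℝ} (hab : a ≤ b) (hg : IntervalIntegrable g volume a b)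
    (hgu : IntervalIntegrable (fun x => g x * u x) volume a b) (hg0 : ∀ x, 0 ≤ g x)
    (H : ∀ t ∈ Icc a b, u t ≤ c + ∫ τ in t..b, g τ * u τ) :
    ∫ τ in a..b, g τ * u τ ≤ c * (Real.exp (∫ τ in a..b, g τ) - 1) := by
  have h := gron (u := fun x => u (-x)) (g := fun x => g (-x)) (a := -b) (b := -a) (c := c)
    (by linarith) ?_ ?_ (fun x => hg0 _) ?_
  · rw [intervalIntegral.integral_comp_neg (fun x => g x * u x),
      intervalIntegral.integral_comp_neg (fun x => g x)] at h
    simpa using h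
  · exact ((IntervalIntegrable.iff_comp_neg (by finiteness)).1 hg).symm
  · exact ((IntervalIntegrable.iff_comp_neg (by finiteness)).1 hgu).symm
  · intro t ht
    rw [intervalIntegral.integral_comp_neg (fun x => g x * u x)]
    simpa using H (-t) ⟨by linarith [ht.2], by linarith [ht.1]⟩

theorem lin_unique {R : Type*} [NormedRing R] [NormedAlgebra ℝ R]
    {A D : ℝ → R} {a b : ℝ} (hA : IntervalIntegrable A volume a b)
    (hD : ContinuousOn D (uIcc a b)) (H : ∀ t ∈ uIcc a b, D t = ∫ τ in a..t, A τ * D τ) :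
    D b = 0 := by
  have hi : IntervalIntegrable (fun x => ‖A x‖ * ‖D x‖) volume a b :=
    hA.norm.mul_continuousOn hD.norm
  rcases le_total a b with hab | hab
  · have hb : ∀ t ∈ Icc a b, ‖D t‖ ≤ ∫ τ in a..t, ‖A τ‖ * ‖D τ‖ := by
      intro t ht
      rw [H t (by rwa [uIcc_of_le hab])]
      refine intervalIntegral.norm_integral_le_of_norm_le ht.1 (.of_forall fun x _ => norm_mul_le _ _)
        (hi.mono_set (uIcc_subset_uIcc left_mem_uIcc (by rwa [uIcc_of_le hab])))
    have := gron (c := 0) hab hA.norm hi (fun _ => norm_nonneg _) (by simpa using hb)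
    have h2 := hb b ⟨hab, le_rfl⟩
    rw [← norm_le_zero_iff]; linarith
  · have hb : ∀ t ∈ Icc b a, ‖D t‖ ≤ ∫ τ in t..a, ‖A τ‖ * ‖D τ‖ := by
      intro t ht
      rw [H t (by rwa [uIcc_of_ge hab]), intervalIntegral.integral_symm, norm_neg]
      refine intervalIntegral.norm_integral_le_of_norm_le ht.2 (.of_forall fun x _ => norm_mul_le _ _)
        (hi.mono_set (uIcc_subset_uIcc (by rwa [uIcc_of_ge hab]) left_mem_uIcc))
    have := gron' (c := 0) hab hA.symm.norm hi.symm (fun _ => norm_nonneg _) (by simpa using hb)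
    have h2 := hb b ⟨le_rfl, hab⟩
    rw [← norm_le_zero_iff]; linarith

theorem int_mul_left {R : Type*} [NormedRing R] [NormedAlgebra ℝ R] [CompleteSpace R]
    {f : ℝ → R} {a b : ℝ} (c : R) (hf : IntervalIntegrable f volume a b) :
    ∫ x in a..b, c * f x = c * ∫ x in a..b, f x :=
  (ContinuousLinearMap.mul ℝ R c).intervalIntegral_comp_comm hf

theorem int_mul_right {R : Type*} [NormedRing R] [NormedAlgebra ℝ R] [CompleteSpace R]
    {f : ℝ → R} {a b : ℝ} (c : R) (hf : IntervalIntegrable f volume a b) :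
    ∫ x in a..b, f x * c = (∫ x in a..b, f x) * c :=
  ((ContinuousLinearMap.mul ℝ R).flip c).intervalIntegral_comp_comm hf

/-- Evolution operators in a Banach algebra. -/
def IsEv {R : Type*} [NormedRing R] [NormedAlgebra ℝ R] (I : Set ℝ) (A : ℝ → R)
    (X : ℝ → ℝ → R) : Prop :=
  ∀ s ∈ I, ContinuousOn (fun t => X t s) I ∧ X s s = 1 ∧
    ∀ u ∈ I, ∀ t ∈ I, X t s - X u s = ∫ τ in u..t, A τ * X τ s

theorem ev_inv {R : Type*} [NormedRing R] [NormedAlgebra ℝ R] [CompleteSpace R] {I : Set ℝ}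
    (hI : I.OrdConnected) {A : ℝ → R}
    (hA : ∀ a ∈ I, ∀ b ∈ I, IntervalIntegrable A volume a b) {X : ℝ → ℝ → R} (hX : IsEv I A X)
    {r s t : ℝ} (hr : r ∈ I) (hs : s ∈ I) (ht : t ∈ I) : X r s * X s t = X r t := by
  have hsub : uIcc s r ⊆ I := hI.uIcc_subset hs hr
  have c1 := (hX s hs).1.mono hsub
  have c2 := (hX t ht).1.mono hsub
  refine sub_eq_zero.1 (lin_unique (D := fun τ => X τ s * X s t - X τ t) (hA s hs r hr)
    ((c1.mul continuousOn_const).sub c2) ?_)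
  intro τ hτ
  have hsub' : uIcc s τ ⊆ uIcc s r := uIcc_subset_uIcc left_mem_uIcc hτ
  have i1 : IntervalIntegrable (fun σ => A σ * X σ s) volume s τ :=
    (hA s hs τ (hsub hτ)).mul_continuousOn (c1.mono hsub')
  have i2 : IntervalIntegrable (fun σ => A σ * X σ t) volume s τ :=
    (hA s hs τ (hsub hτ)).mul_continuousOn (c2.mono hsub')
  have e1 := (hX s hs).2.2 s hs τ (hsub hτ)
  have e2 := (hX t ht).2.2 s hs τ (hsub hτ)
  rw [(hX s hs).2.1] at e1
  simp only [mul_sub, ← mul_assoc]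
  rw [intervalIntegral.integral_sub (i1.mul_const _) i2, ← e2,
    int_mul_right _ i1, ← e1]
  noncomm_ring

theorem ev_cont {R : Type*} [NormedRing R] [NormedAlgebra ℝ R] [CompleteSpace R] {I : Set ℝ}
    (hI : I.OrdConnected) {A : ℝ → R}
    (hA : ∀ a ∈ I, ∀ b ∈ I, IntervalIntegrable A volume a b) {X : ℝ → ℝ → R} (hX : IsEv I A X)
    {s : ℝ} (hs : s ∈ I) : ContinuousOn (fun τ => X s τ) I := by
  have h1 : ∀ τ ∈ I, X s τ * X τ s = 1 := fun τ hτ => by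
    rw [ev_inv hI hA hX hs hτ hs, (hX s hs).2.1]
  have h2 : ∀ τ ∈ I, X τ s * X s τ = 1 := fun τ hτ => by
    rw [ev_inv hI hA hX hτ hs hτ, (hX τ hτ).2.1]
  have : ContinuousOn (fun τ => Ring.inverse (X τ s)) I := by
    intro τ hτ
    have hc := NormedRing.inverse_continuousAt (⟨X τ s, X s τ, h2 τ hτ, h1 τ hτ⟩ : Rˣ)
    exact ContinuousAt.comp_continuousWithinAt (f := fun τ => X τ s) hc ((hX s hs).1 τ hτ)
  refine this.congr fun τ hτ => ?_
  exact (Ring.inverse_unit (⟨X τ s, X s τ, h2 τ hτ, h1 τ hτ⟩ : Rˣ)).symm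

theorem ev_var {R : Type*} [NormedRing R] [NormedAlgebra ℝ R] [CompleteSpace R] {I : Set ℝ}
    (hI : I.OrdConnected) {A₁ A₂ : ℝ → R}
    (hA₁ : ∀ a ∈ I, ∀ b ∈ I, IntervalIntegrable A₁ volume a b)
    (hA₂ : ∀ a ∈ I, ∀ b ∈ I, IntervalIntegrable A₂ volume a b)
    {X₁ X₂ : ℝ → ℝ → R} (hX₁ : IsEv I A₁ X₁) (hX₂ : IsEv I A₂ X₂)
    {s t : ℝ} (hs : s ∈ I) (ht : t ∈ I) :
    X₂ t s - X₁ t s = ∫ τ in s..t, X₁ t τ * ((A₂ τ - A₁ τ) * X₂ τ s) := by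
  have hsub : uIcc s t ⊆ I := hI.uIcc_subset hs ht
  have c1 := (hX₁ s hs).1.mono hsub
  have c2 := (hX₂ s hs).1.mono hsub
  have cz := (ev_cont hI hA₁ hX₁ hs).mono hsub
  have iB : IntervalIntegrable (fun τ => (A₂ τ - A₁ τ) * X₂ τ s) volume s t :=
    ((hA₂ s hs t ht).sub (hA₁ s hs t ht)).mul_continuousOn c2
  have iJ : IntervalIntegrable (fun τ => X₁ s τ * ((A₂ τ - A₁ τ) * X₂ τ s)) volume s t :=
    iB.continuousOn_mul cz
  let J : ℝ → R := fun τ => 1 + ∫ σ in s..τ, X₁ s σ * ((A₂ σ - A₁ σ) * X₂ σ s)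
  have cJ : ContinuousOn J (uIcc s t) := continuousOn_const.add (ac_prim iJ).continuousOn
  have hD : X₂ t s - X₁ t s * J t = 0 := by
    refine lin_unique (D := fun τ => X₂ τ s - X₁ τ s * J τ) (hA₁ s hs t ht)
      (c2.sub (c1.mul cJ)) ?_
    intro τ hτ
    have hτI := hsub hτ
    have hsub' : uIcc s τ ⊆ uIcc s t := uIcc_subset_uIcc left_mem_uIcc hτ
    have i1 : IntervalIntegrable (fun σ => A₁ σ * X₁ σ s) volume s τ :=
      (hA₁ s hs τ hτI).mul_continuousOn (c1.mono hsub')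
    have i2 : IntervalIntegrable (fun σ => A₂ σ * X₂ σ s) volume s τ :=
      (hA₂ s hs τ hτI).mul_continuousOn (c2.mono hsub')
    have p := prim_mul (f := fun σ => X₁ σ s) (g := J) i1 (iJ.mono_set hsub')
      (by
        intro σ hσ
        have := (hX₁ s hs).2.2 s hs σ (hsub (hsub' hσ))
        simp only [← this]; abel)
      (by intro σ hσ; simp [J])
    have e2 := (hX₂ s hs).2.2 s hs τ hτI
    have j0 : J s = 1 := by simp [J]
    simp only [j0, (hX₁ s hs).2.1, (hX₂ s hs).2.1, mul_one] at p e2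
    have q : X₂ τ s - X₁ τ s * J τ = (X₂ τ s - 1) - (X₁ τ s * J τ - 1) := by abel
    simp only [q]
    rw [p, e2, ← intervalIntegral.integral_sub i2]
    · apply intervalIntegral.integral_congr
      intro σ hσ
      have hσI := hsub (hsub' hσ)
      have hinv : X₁ σ s * X₁ s σ = 1 := by
        rw [ev_inv hI hA₁ hX₁ hσI hs hσI, (hX₁ σ hσI).2.1]
      simp only [← mul_assoc (X₁ σ s) (X₁ s σ), hinv]
      noncomm_ring
    · exact (i1.mul_continuousOn (cJ.mono hsub')).add
        ((iJ.mono_set hsub').continuousOn_mul (c1.mono hsub'))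
  have e : ∫ τ in s..t, X₁ t τ * ((A₂ τ - A₁ τ) * X₂ τ s)
      = X₁ t s * ∫ τ in s..t, X₁ s τ * ((A₂ τ - A₁ τ) * X₂ τ s) := by
    rw [← int_mul_left _ iJ]
    apply intervalIntegral.integral_congr
    intro τ hτ
    simp only [← mul_assoc (X₁ t s), ev_inv hI hA₁ hX₁ ht hs (hsub hτ)]
  rw [e, sub_eq_zero.1 hD]
  simp only [J]
  noncomm_ring

theorem ev_main_fwd {R : Type*} [NormedRing R] [NormedAlgebra ℝ R] [CompleteSpace R] {I : Set ℝ}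
    (hI : I.OrdConnected) {A₁ A₂ : ℝ → R}
    (hA₁ : ∀ a ∈ I, ∀ b ∈ I, IntervalIntegrable A₁ volume a b)
    (hA₂ : ∀ a ∈ I, ∀ b ∈ I, IntervalIntegrable A₂ volume a b)
    {X₁ X₂ : ℝ → ℝ → R} (hX₁ : IsEv I A₁ X₁) (hX₂ : IsEv I A₂ X₂)
    {N ν : ℝ} (hN : 0 < N)
    (hb : ∀ s ∈ I, ∀ t ∈ I, s ≤ t → ‖X₁ t s‖ ≤ N * Real.exp (-ν * (t - s)))
    {s t : ℝ} (hs : s ∈ I) (ht : t ∈ I) (hst : s ≤ t) :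
    ‖X₂ t s - X₁ t s‖ ≤
      N * Real.exp (-ν * (t - s)) * (Real.exp (N * ∫ τ in s..t, ‖A₂ τ - A₁ τ‖) - 1) := by
  have hsub : Icc s t ⊆ I := hI.out hs ht
  have hB := (hA₂ s hs t ht).sub (hA₁ s hs t ht)
  have c2 : ContinuousOn (fun τ => X₂ τ s) (uIcc s t) :=
    (hX₂ s hs).1.mono (by rwa [uIcc_of_le hst])
  let u : ℝ → ℝ := fun τ => Real.exp (ν * (τ - s)) * ‖X₂ τ s‖
  have cu : ContinuousOn u (uIcc s t) :=
    (Continuous.continuousOn (by fun_prop)).mul c2.norm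
  let g : ℝ → ℝ := fun τ => N * ‖A₂ τ - A₁ τ‖
  have ig : IntervalIntegrable g volume s t := hB.norm.const_mul N
  have igu : IntervalIntegrable (fun τ => g τ * u τ) volume s t := ig.mul_continuousOn cu
  have hd : ∀ τ ∈ Icc s t, ‖X₂ τ s - X₁ τ s‖ ≤
      Real.exp (-ν * (τ - s)) * ∫ σ in s..τ, g σ * u σ := by
    intro τ hτ
    rw [ev_var hI hA₁ hA₂ hX₁ hX₂ hs (hsub hτ), ← intervalIntegral.integral_const_mul]
    refine intervalIntegral.norm_integral_le_of_norm_le hτ.1 (.of_forall fun σ hσ => ?_)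
      ((igu.mono_set (uIcc_subset_uIcc left_mem_uIcc (by rwa [uIcc_of_le hst]))).const_mul _)
    have hσI : σ ∈ I := hsub ⟨hσ.1.le, hσ.2.trans hτ.2⟩
    have h1 := hb σ hσI τ (hsub hτ) hσ.2
    have h2 : Real.exp (-ν * (τ - σ)) = Real.exp (-ν * (τ - s)) * Real.exp (ν * (σ - s)) := by
      rw [← Real.exp_add]; congr 1; ring
    calc _ ≤ ‖X₁ τ σ‖ * (‖A₂ σ - A₁ σ‖ * ‖X₂ σ s‖) :=
          (norm_mul_le _ _).trans (mul_le_mul_of_nonneg_left (norm_mul_le _ _) (norm_nonneg _))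
      _ ≤ (N * Real.exp (-ν * (τ - σ))) * (‖A₂ σ - A₁ σ‖ * ‖X₂ σ s‖) :=
          mul_le_mul_of_nonneg_right h1 (by positivity)
      _ = _ := by rw [h2]; simp only [g, u]; ring
  have hG := gron (c := N) hst ig igu (fun x => by simp only [g]; positivity) (by
    intro τ hτ
    have h1 := hd τ hτ
    have h2 := hb s hs τ (hsub hτ) hτ.1
    have h3 : ‖X₂ τ s‖ ≤ Real.exp (-ν * (τ - s)) * (N + ∫ σ in s..τ, g σ * u σ) := by
      have := norm_add_le (X₂ τ s - X₁ τ s) (X₁ τ s)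
      rw [sub_add_cancel] at this
      linarith
    have h4 := mul_le_mul_of_nonneg_left h3 (Real.exp_pos (ν * (τ - s))).le
    rw [← mul_assoc, ← Real.exp_add, show ν * (τ - s) + -ν * (τ - s) = 0 by ring, Real.exp_zero,
      one_mul] at h4
    exact h4)
  simp only [g, intervalIntegral.integral_const_mul] at hG
  refine (hd t ⟨hst, le_rfl⟩).trans ?_
  refine (mul_le_mul_of_nonneg_left hG (Real.exp_pos _).le).trans (le_of_eq ?_)
  ring

theorem ev_main_bwd {R : Type*} [NormedRing R] [NormedAlgebra ℝ R] [CompleteSpace R] {I : Set ℝ}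
    (hI : I.OrdConnected) {A₁ A₂ : ℝ → R}
    (hA₁ : ∀ a ∈ I, ∀ b ∈ I, IntervalIntegrable A₁ volume a b)
    (hA₂ : ∀ a ∈ I, ∀ b ∈ I, IntervalIntegrable A₂ volume a b)
    {X₁ X₂ : ℝ → ℝ → R} (hX₁ : IsEv I A₁ X₁) (hX₂ : IsEv I A₂ X₂)
    {N ν : ℝ} (hN : 0 < N)
    (hb : ∀ s ∈ I, ∀ t ∈ I, s ≤ t → ‖X₁ s t‖ ≤ N * Real.exp (-ν * (t - s)))
    {s t : ℝ} (hs : s ∈ I) (ht : t ∈ I) (hst : s ≤ t) :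
    ‖X₂ s t - X₁ s t‖ ≤
      N * Real.exp (-ν * (t - s)) * (Real.exp (N * ∫ τ in s..t, ‖A₂ τ - A₁ τ‖) - 1) := by
  have hsub : Icc s t ⊆ I := hI.out hs ht
  have hB := (hA₂ s hs t ht).sub (hA₁ s hs t ht)
  have c2 : ContinuousOn (fun τ => X₂ τ t) (uIcc s t) :=
    (hX₂ t ht).1.mono (by rwa [uIcc_of_le hst])
  let u : ℝ → ℝ := fun τ => Real.exp (ν * (t - τ)) * ‖X₂ τ t‖
  have cu : ContinuousOn u (uIcc s t) :=
    (Continuous.continuousOn (by fun_prop)).mul c2.norm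
  let g : ℝ → ℝ := fun τ => N * ‖A₂ τ - A₁ τ‖
  have ig : IntervalIntegrable g volume s t := hB.norm.const_mul N
  have igu : IntervalIntegrable (fun τ => g τ * u τ) volume s t := ig.mul_continuousOn cu
  have hd : ∀ τ ∈ Icc s t, ‖X₂ τ t - X₁ τ t‖ ≤
      Real.exp (-ν * (t - τ)) * ∫ σ in τ..t, g σ * u σ := by
    intro τ hτ
    rw [ev_var hI hA₁ hA₂ hX₁ hX₂ ht (hsub hτ), intervalIntegral.integral_symm, norm_neg,
      ← intervalIntegral.integral_const_mul]
    refine intervalIntegral.norm_integral_le_of_norm_le hτ.2 (.of_forall fun σ hσ => ?_)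
      ((igu.mono_set (uIcc_subset_uIcc (by rwa [uIcc_of_le hst]) right_mem_uIcc)).const_mul _)
    have hσI : σ ∈ I := hsub ⟨hτ.1.trans hσ.1.le, hσ.2⟩
    have h1 := hb τ (hsub hτ) σ hσI hσ.1.le
    have h2 : Real.exp (-ν * (σ - τ)) = Real.exp (-ν * (t - τ)) * Real.exp (ν * (t - σ)) := by
      rw [← Real.exp_add]; congr 1; ring
    calc _ ≤ ‖X₁ τ σ‖ * (‖A₂ σ - A₁ σ‖ * ‖X₂ σ t‖) :=
          (norm_mul_le _ _).trans (mul_le_mul_of_nonneg_left (norm_mul_le _ _) (norm_nonneg _))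
      _ ≤ (N * Real.exp (-ν * (σ - τ))) * (‖A₂ σ - A₁ σ‖ * ‖X₂ σ t‖) :=
          mul_le_mul_of_nonneg_right h1 (by positivity)
      _ = _ := by rw [h2]; simp only [g, u]; ring
  have hG := gron' (c := N) hst ig igu (fun x => by simp only [g]; positivity) (by
    intro τ hτ
    have h1 := hd τ hτ
    have h2 := hb τ (hsub hτ) t ht hτ.2
    have h3 : ‖X₂ τ t‖ ≤ Real.exp (-ν * (t - τ)) * (N + ∫ σ in τ..t, g σ * u σ) := by
      have := norm_add_le (X₂ τ t - X₁ τ t) (X₁ τ t)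
      rw [sub_add_cancel] at this
      linarith
    have h4 := mul_le_mul_of_nonneg_left h3 (Real.exp_pos (ν * (t - τ))).le
    rw [← mul_assoc, ← Real.exp_add, show ν * (t - τ) + -ν * (t - τ) = 0 by ring, Real.exp_zero,
      one_mul] at h4
    exact h4)
  simp only [g, intervalIntegral.integral_const_mul] at hG
  refine (hd s ⟨le_rfl, hst⟩).trans ?_
  refine (mul_le_mul_of_nonneg_left hG (Real.exp_pos _).le).trans (le_of_eq ?_)
  ring

/-- comparison lemma of Daleckii–Krein. -/
theorem stmt6 {E : Type*} [NormedAddCommGroup E] [NormedSpace ℝ E] [CompleteSpace E]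
    (I : Set ℝ) (hI : I.OrdConnected) (A₁ A₂ : ℝ → E →L[ℝ] E)
    (hA₁ : ∀ a ∈ I, ∀ b ∈ I, IntervalIntegrable A₁ volume a b)
    (hA₂ : ∀ a ∈ I, ∀ b ∈ I, IntervalIntegrable A₂ volume a b)
    (X₁ X₂ : ℝ → ℝ → E →L[ℝ] E)
    (hX₁ : IsEvolutionOperator I A₁ X₁) (hX₂ : IsEvolutionOperator I A₂ X₂)
    (N ν₁ : ℝ) (hN : 0 < N) (ε : Bool)
    (hb : ∀ s ∈ I, ∀ t ∈ I, s ≤ t → ‖evPow X₁ ε t s‖ ≤ N * Real.exp (-ν₁ * (t - s))) :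
    ∀ s ∈ I, ∀ t ∈ I, s ≤ t →
      ‖evPow X₂ ε t s‖ ≤
        N * Real.exp (-ν₁ * (t - s)) * Real.exp (N * ∫ τ in s..t, ‖A₂ τ - A₁ τ‖) ∧
      ‖evPow X₂ ε t s - evPow X₁ ε t s‖ ≤
        N * Real.exp (-ν₁ * (t - s)) * (Real.exp (N * ∫ τ in s..t, ‖A₂ τ - A₁ τ‖) - 1) := by
  intro s hs t ht hst
  have h1 : IsEv I A₁ X₁ := hX₁
  have h2 : IsEv I A₂ X₂ := hX₂
  have key : ‖evPow X₂ ε t s - evPow X₁ ε t s‖ ≤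
      N * Real.exp (-ν₁ * (t - s)) * (Real.exp (N * ∫ τ in s..t, ‖A₂ τ - A₁ τ‖) - 1) := by
    cases ε with
    | true =>
      simp only [evPow, if_true] at hb ⊢
      exact ev_main_fwd hI hA₁ hA₂ h1 h2 hN hb hs ht hst
    | false =>
      simp only [evPow, Bool.false_eq_true, if_false] at hb ⊢
      exact ev_main_bwd hI hA₁ hA₂ h1 h2 hN hb hs ht hst
  refine ⟨?_, key⟩
  have h3 := hb s hs t ht hst
  have h4 := norm_add_le (evPow X₂ ε t s - evPow X₁ ε t s) (evPow X₁ ε t s)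
  rw [sub_add_cancel] at h4
  linarith
end

section
/- Let J ⊆ ℝ be an interval, n ∈ ℕ, a₀ < a₁ < ... < aₙ real numbers, E a Banach space, F = End(E), and G₀, ..., G_{n−1} ∈ L^∞_loc(J; F) ∩ L¹(J; F). Set N = exp(max_{i<n} ‖G_i‖_{L¹(J;F)}) (with max over empty set equal 0), V = Σ_{0<j<n} ‖G_j − G_{j−1}‖_{L¹(J;F)}, and I = [a₀, aₙ]. Then for every absolutely continuous f : I → ℝ with f(I) ⊆ J, the function A : I → F defined by A(t) = f'(t) Gᵢ(f(t)) for t ∈ [aᵢ, a_{i+1}) (i < n) is Bochner integrable on I, and any evolution operator X for A in E satisfies ‖X(t, s)^{±1}‖ ≤ N² exp(N^{3+2N} V) for all s ≤ t in I. -/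
open MeasureTheory Set intervalIntegral

namespace S9

theorem ac_of_dist_le {X Y W : Type*} [PseudoMetricSpace X] [PseudoMetricSpace Y]
    [PseudoMetricSpace W] {F : ℝ → W} {P : ℝ → X} {Q : ℝ → Y} {a b C D : ℝ}
    (hP : AbsolutelyContinuousOnInterval P a b) (hQ : AbsolutelyContinuousOnInterval Q a b)
    (h : ∀ x ∈ uIcc a b, ∀ y ∈ uIcc a b,
      dist (F x) (F y) ≤ C * dist (P x) (P y) + D * dist (Q x) (Q y)) :
    AbsolutelyContinuousOnInterval F a b := by
  unfold AbsolutelyContinuousOnInterval at hP hQ ⊢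
  have hsum := (Filter.Tendsto.const_mul C hP).add (Filter.Tendsto.const_mul D hQ)
  simp only [mul_zero, add_zero] at hsum
  refine squeeze_zero' (Filter.Eventually.of_forall fun t => Finset.sum_nonneg fun i _ => dist_nonneg)
    ?_ hsum
  refine Filter.eventually_inf_principal.2 (Filter.Eventually.of_forall fun E hE => ?_)
  simp only [Finset.mul_sum]
  rw [← Finset.sum_add_distrib]
  exact Finset.sum_le_sum fun i hi => h _ (hE.1 i hi).1 _ (hE.1 i hi).2

theorem ac_integral {B : Type*} [NormedAddCommGroup B] [NormedSpace ℝ B]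
    {g : ℝ → B} {a b c : ℝ} (hg : IntervalIntegrable g volume a b) (hc : c ∈ uIcc a b) :
    AbsolutelyContinuousOnInterval (fun x => ∫ y in c..x, g y) a b := by
  have hac := hg.norm.absolutelyContinuousOnInterval_intervalIntegral (c := c) hc
  refine ac_of_dist_le (C := 1) (D := 0) hac hac (fun x hx y hy => ?_)
  have hcx : IntervalIntegrable g volume c x := hg.mono_set (uIcc_subset_uIcc hc hx)
  have hcy : IntervalIntegrable g volume c y := hg.mono_set (uIcc_subset_uIcc hc hy)
  rw [dist_eq_norm, Real.dist_eq, integral_interval_sub_left hcx hcy,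
    integral_interval_sub_left hcx.norm hcy.norm]
  simpa using norm_integral_le_abs_integral_norm

theorem ftc_ac {B : Type*} [NormedAddCommGroup B] [NormedSpace ℝ B] [CompleteSpace B]
    {F g : ℝ → B} {a b : ℝ} (hF : AbsolutelyContinuousOnInterval F a b)
    (hd : ∀ᵐ x, x ∈ uIcc a b → HasDerivAt F (g x) x)
    (hg : IntervalIntegrable g volume a b) : F b - F a = ∫ x in a..b, g x := by
  have hac := ac_integral hg (c := a) (by simp)
  obtain ⟨C, hC⟩ := (hF.sub hac).const_of_ae_hasDerivAt_zero (by
    filter_upwards [hd, hg.ae_hasDerivAt_integral] with x h1 h2 h3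
    convert! (h1 h3).sub (h2 h3 a (by simp))
    abel)
  have h1 := hC a (by simp)
  have h2 := hC b (by simp)
  simp only [Pi.sub_apply, integral_same, sub_zero] at h1 h2
  rw [h1, ← h2]; abel

theorem prod_rule {B : Type*} [NormedRing B] [NormedAlgebra ℝ B] [CompleteSpace B]
    {P Q p q : ℝ → B} {a b : ℝ} (hab : a ≤ b)
    (hp : IntervalIntegrable p volume a b) (hq : IntervalIntegrable q volume a b)
    (hP : ∀ x ∈ Icc a b, P x - P a = ∫ y in a..x, p y)
    (hQ : ∀ x ∈ Icc a b, Q x - Q a = ∫ y in a..x, q y) :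
    P b * Q b - P a * Q a = ∫ x in a..b, (p x * Q x + P x * q x) := by
  have hu : uIcc a b = Icc a b := uIcc_of_le hab
  set P' : ℝ → B := fun x => P a + ∫ y in a..x, p y with hP'
  set Q' : ℝ → B := fun x => Q a + ∫ y in a..x, q y with hQ'
  have eP : ∀ x ∈ Icc a b, P x = P' x := fun x hx => by
    simp only [hP']; rw [← hP x hx]; abel
  have eQ : ∀ x ∈ Icc a b, Q x = Q' x := fun x hx => by
    simp only [hQ']; rw [← hQ x hx]; abel
  have acp := ac_integral hp (c := a) (by simp)
  have acq := ac_integral hq (c := a) (by simp)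
  have acP : AbsolutelyContinuousOnInterval P' a b :=
    ac_of_dist_le (C := 1) (D := 0) acp acp (fun x _ y _ => by simp [hP'])
  have acQ : AbsolutelyContinuousOnInterval Q' a b :=
    ac_of_dist_le (C := 1) (D := 0) acq acq (fun x _ y _ => by simp [hQ'])
  obtain ⟨C, hC⟩ := acP.exists_bound
  obtain ⟨D, hD⟩ := acQ.exists_bound
  have acPQ : AbsolutelyContinuousOnInterval (fun x => P' x * Q' x) a b := by
    refine ac_of_dist_le (C := D) (D := C) acP acQ (fun x hx y hy => ?_)
    rw [dist_eq_norm, dist_eq_norm, dist_eq_norm]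
    have : P' x * Q' x - P' y * Q' y = (P' x - P' y) * Q' x + P' y * (Q' x - Q' y) := by
      noncomm_ring
    rw [this]
    refine (norm_add_le _ _).trans (add_le_add ?_ ?_)
    · refine (norm_mul_le _ _).trans ?_
      rw [mul_comm]
      exact mul_le_mul_of_nonneg_right (hD x hx) (norm_nonneg _)
    · refine (norm_mul_le _ _).trans ?_
      exact mul_le_mul_of_nonneg_right (hC y hy) (norm_nonneg _)
  have hint : IntervalIntegrable (fun x => p x * Q' x + P' x * q x) volume a b :=
    (hp.mul_continuousOn acQ.continuousOn).add (hq.continuousOn_mul acP.continuousOn)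
  have key := ftc_ac (g := fun x => p x * Q' x + P' x * q x) acPQ (by
    filter_upwards [hp.ae_hasDerivAt_integral, hq.ae_hasDerivAt_integral] with x h1 h2 h3
    exact ((h1 h3 a (by simp)).const_add (P a)).mul ((h2 h3 a (by simp)).const_add (Q a))) hint
  have ha : a ∈ Icc a b := ⟨le_rfl, hab⟩
  have hb : b ∈ Icc a b := ⟨hab, le_rfl⟩
  rw [eP b hb, eQ b hb, eP a ha, eQ a ha, key]
  refine integral_congr fun x hx => ?_
  rw [hu] at hx
  simp only [eP x hx, eQ x hx]

theorem null_pullback {f f' : ℝ → ℝ} {Z : Set ℝ} (hZ : volume Z = 0) {s : Set ℝ}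
    (hs : ∀ x ∈ s, HasDerivAt f (f' x) x) (hs0 : ∀ x ∈ s, f' x ≠ 0) (hsZ : ∀ x ∈ s, f x ∈ Z) :
    volume s = 0 := by
  classical
  have key : ∀ A : ℝ →L[ℝ] ℝ, ∃ δ : NNReal, δ ≠ 0 ∧ (A.det ≠ 0 → ∀ u : Set ℝ,
      ApproximatesLinearOn f A u δ → volume (f '' u) = 0 → volume u = 0) := by
    intro A
    by_cases hA : A.det = 0
    · exact ⟨1, one_ne_zero, fun h => (h hA).elim⟩
    · have hpos : 0 < ENNReal.ofReal |A.det| := by simpa using hA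
      obtain ⟨m, hm0, hm⟩ := ENNReal.lt_iff_exists_nnreal_btwn.1 hpos
      have h1 := mul_le_addHaar_image_of_lt_det (μ := (volume : Measure ℝ)) A hm
      obtain ⟨δ, hδ, hδ0⟩ := (h1.and self_mem_nhdsWithin).exists
      refine ⟨δ, (ne_of_gt hδ0), fun _ u hu hz => ?_⟩
      have := hδ u f hu
      rw [hz] at this
      simpa [hm0.ne'] using this
  choose r hr hr2 using key
  obtain ⟨t, A, -, -, hcov, happ, hA⟩ :=
    exists_partition_approximatesLinearOn_of_hasFDerivWithinAt f s
      (fun x => ContinuousLinearMap.toSpanSingleton ℝ (f' x))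
      (fun x hx => (hs x hx).hasFDerivAt.hasFDerivWithinAt) r hr
  rcases s.eq_empty_or_nonempty with rfl | hne
  · simp
  refine measure_mono_null (t := ⋃ n, s ∩ t n) (fun x hx => ?_) (measure_iUnion_null fun n => ?_)
  · have := hcov hx
    simp only [mem_iUnion] at this ⊢
    obtain ⟨n, hn⟩ := this
    exact ⟨n, hx, hn⟩
  · refine hr2 (A n) ?_ _ (happ n) ?_
    · obtain ⟨y, hy, e⟩ := hA hne n
      rw [e]
      have : ((ContinuousLinearMap.toSpanSingleton ℝ (f' y)) : ℝ →L[ℝ] ℝ).det = f' y := by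
        simp [ContinuousLinearMap.det]
      rw [this]
      exact hs0 y hy
    · refine measure_mono_null ?_ hZ
      rintro _ ⟨x, hx, rfl⟩
      exact hsZ x hx.1

end S9


namespace S9

theorem ae_congr_pullback {B : Type*} [NormedAddCommGroup B] [NormedSpace ℝ B]
    {G g : ℝ → B} {K : Set ℝ} (hGg : ∀ᵐ x, x ∈ K → G x = g x)
    {f f' : ℝ → ℝ} {S : Set ℝ} (hfK : ∀ t ∈ S, f t ∈ K)
    (hf' : ∀ᵐ x, x ∈ S → HasDerivAt f (f' x) x) :
    ∀ᵐ t, t ∈ S → f' t • G (f t) = f' t • g (f t) := by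
  have hn := null_pullback (f := f) (f' := f') (Z := {x | ¬ (x ∈ K → G x = g x)}) hGg
    (s := {t | HasDerivAt f (f' t) t ∧ f' t ≠ 0 ∧ ¬ (f t ∈ K → G (f t) = g (f t))})
    (fun x hx => hx.1) (fun x hx => hx.2.1) (fun x hx => hx.2.2)
  have hn' : ∀ᵐ t, ¬ (HasDerivAt f (f' t) t ∧ f' t ≠ 0 ∧ ¬ (f t ∈ K → G (f t) = g (f t))) := by
    rw [ae_iff]; simpa using hn
  filter_upwards [hf', hn'] with t h1 h2 ht
  by_cases h0 : f' t = 0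
  · simp [h0]
  · have : f t ∈ K → G (f t) = g (f t) := by
      by_contra h; exact h2 ⟨h1 ht, h0, h⟩
    rw [this (hfK t ht)]

theorem locInt_of_bdd {B : Type*} [NormedAddCommGroup B]
    {g : ℝ → B} (hgm : StronglyMeasurable g) {M : ℝ} (hM : ∀ x, ‖g x‖ ≤ M) :
    LocallyIntegrable g volume := by
  have h : LocallyIntegrable (fun _ : ℝ => M) volume := continuous_const.locallyIntegrable
  exact h.mono hgm.aestronglyMeasurable
    (Filter.Eventually.of_forall fun x => (hM x).trans (le_abs_self M))

theorem ii_of_bdd {B : Type*} [NormedAddCommGroup B]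
    {g : ℝ → B} (hgm : StronglyMeasurable g) {M : ℝ} (hM : ∀ x, ‖g x‖ ≤ M) (a b : ℝ) :
    IntervalIntegrable g volume a b :=
  intervalIntegrable_iff.mpr <|
    ((locInt_of_bdd hgm hM).integrableOn_isCompact isCompact_uIcc).mono_set uIoc_subset_uIcc

theorem subst_integrable {B : Type*} [NormedAddCommGroup B] [NormedSpace ℝ B]
    {g : ℝ → B} (hgm : StronglyMeasurable g) {M : ℝ} (hM : ∀ x, ‖g x‖ ≤ M)
    {f f' : ℝ → ℝ} {a b : ℝ} (hab : a ≤ b) (hf : AbsolutelyContinuousOnInterval f a b)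
    (hf' : ∀ᵐ x, x ∈ Icc a b → HasDerivAt f (f' x) x) :
    IntegrableOn (fun t => f' t • g (f t)) (Icc a b) := by
  have h0 : IntegrableOn (deriv f) (Icc a b) := by
    have := hf.intervalIntegrable_deriv
    rwa [intervalIntegrable_iff_integrableOn_Icc_of_le hab] at this
  have h1 : IntegrableOn f' (Icc a b) := by
    refine h0.congr ?_
    rw [Filter.EventuallyEq, ae_restrict_iff' measurableSet_Icc]
    filter_upwards [hf'] with x hx h using (hx h).deriv
  have hc : ContinuousOn f (Icc a b) := by
    have := hf.continuousOn; rwa [uIcc_of_le hab] at this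
  have hfm : AEMeasurable f (volume.restrict (Icc a b)) := hc.aemeasurable measurableSet_Icc
  have hgf : AEStronglyMeasurable (fun t => g (f t)) (volume.restrict (Icc a b)) :=
    ⟨fun t => g (hfm.mk f t), hgm.comp_measurable hfm.measurable_mk, by
      filter_upwards [hfm.ae_eq_mk] with t ht
      rw [ht]⟩
  refine Integrable.mono' (h1.norm.mul_const M) (h1.aestronglyMeasurable.smul hgf) ?_
  refine Filter.Eventually.of_forall fun x => ?_
  rw [norm_smul]
  exact mul_le_mul_of_nonneg_left (hM _) (norm_nonneg _)

theorem subst_integral {B : Type*} [NormedAddCommGroup B] [NormedSpace ℝ B] [CompleteSpace B]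
    {g : ℝ → B} (hgm : StronglyMeasurable g) {M : ℝ} (hM : ∀ x, ‖g x‖ ≤ M)
    {f f' : ℝ → ℝ} {a b : ℝ} (hab : a ≤ b) (hf : AbsolutelyContinuousOnInterval f a b)
    (hf' : ∀ᵐ x, x ∈ Icc a b → HasDerivAt f (f' x) x) :
    ∫ t in a..b, f' t • g (f t) = ∫ x in (f a)..(f b), g x := by
  have hii := ii_of_bdd hgm hM
  set H : ℝ → B := fun x => ∫ y in (0:ℝ)..x, g y with hH
  have hLip : ∀ x y, ‖H x - H y‖ ≤ M * ‖x - y‖ := by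
    intro x y
    simp only [hH]
    rw [integral_interval_sub_left (hii _ _) (hii _ _), Real.norm_eq_abs]
    exact norm_integral_le_of_norm_le_const fun t _ => hM t
  have hac : AbsolutelyContinuousOnInterval (fun t => H (f t)) a b :=
    ac_of_dist_le (C := M) (D := 0) hf hf (fun x _ y _ => by
      simpa [dist_eq_norm] using hLip (f x) (f y))
  have hder := LocallyIntegrable.ae_hasDerivAt_integral (locInt_of_bdd hgm hM)
  have hn := null_pullback (f := f) (f' := f') (Z := {x | ¬ HasDerivAt H (g x) x})
    (by
      have : ∀ᵐ x, HasDerivAt H (g x) x := by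
        filter_upwards [hder] with x hx using hx 0
      exact this)
    (s := {t | HasDerivAt f (f' t) t ∧ f' t ≠ 0 ∧ ¬ HasDerivAt H (g (f t)) (f t)})
    (fun x hx => hx.1) (fun x hx => hx.2.1) (fun x hx => hx.2.2)
  have hn' : ∀ᵐ t, ¬ (HasDerivAt f (f' t) t ∧ f' t ≠ 0 ∧ ¬ HasDerivAt H (g (f t)) (f t)) := by
    rw [ae_iff]; simpa using hn
  have key := ftc_ac (g := fun t => f' t • g (f t)) hac (by
    rw [uIcc_of_le hab]
    filter_upwards [hf', hn'] with t h1 h2 ht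
    have hft := h1 ht
    by_cases h0 : f' t = 0
    · rw [h0] at hft ⊢
      rw [zero_smul]
      rw [hasDerivAt_iff_isLittleO] at hft ⊢
      simp only [smul_zero, sub_zero] at hft ⊢
      refine Asymptotics.IsBigO.trans_isLittleO ?_ hft
      exact Asymptotics.IsBigO.of_bound M (Filter.Eventually.of_forall fun x => hLip _ _)
    · have hHd : HasDerivAt H (g (f t)) (f t) := by
        by_contra h; exact h2 ⟨hft, h0, h⟩
      exact hHd.scomp t hft)
    ((intervalIntegrable_iff_integrableOn_Icc_of_le hab).2 (subst_integrable hgm hM hab hf hf'))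
  rw [← key]
  simp only [hH]
  rw [integral_interval_sub_left (hii _ _) (hii _ _)]

theorem integral_pow_primitive {b : ℝ → ℝ} {c x : ℝ}
    (hb : IntervalIntegrable b volume c x) (k : ℕ) :
    ∫ y in c..x, b y * ((∫ z in c..y, b z) ^ k / k.factorial)
      = (∫ z in c..x, b z) ^ (k + 1) / (k + 1).factorial := by
  set h : ℝ → ℝ := fun y => ∫ z in c..y, b z with hh
  have hac : AbsolutelyContinuousOnInterval h c x := ac_integral hb (by simp)
  have hpow : ∀ m : ℕ, AbsolutelyContinuousOnInterval (fun y => h y ^ m) c x := by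
    intro m
    induction m with
    | zero => exact ac_of_dist_le (C := 0) (D := 0) hac hac (fun x _ y _ => by simp)
    | succ m ih =>
      have := ih.mul hac
      simp only [pow_succ]
      exact this
  have hF : AbsolutelyContinuousOnInterval
      (fun y => ((k + 1).factorial : ℝ)⁻¹ * h y ^ (k + 1)) c x := (hpow (k+1)).const_mul _
  have key := ftc_ac (g := fun y => b y * (h y ^ k / k.factorial)) hF (by
    filter_upwards [hb.ae_hasDerivAt_integral] with y hy hyy
    have h1 : HasDerivAt h (b y) y := hy hyy c (by simp)
    have h2 := (h1.pow (k + 1)).const_mul (((k + 1).factorial : ℝ)⁻¹)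
    refine h2.congr_deriv ?_
    rw [Nat.factorial_succ]
    have : (k.factorial : ℝ) ≠ 0 := by positivity
    have : (k + 1 : ℝ) ≠ 0 := by positivity
    push_cast
    field_simp)
    (hb.mul_continuousOn ((hac.continuousOn.pow k).div_const _))
  rw [← key]
  simp [hh, div_eq_inv_mul]

end S9


namespace S9

theorem sm_apply {B : Type*} [NormedAddCommGroup B] [NormedSpace ℝ B]
    {T : ℝ → B →L[ℝ] B} (hTm : StronglyMeasurable T) {p : ℝ → B} (hp : Continuous p) :
    StronglyMeasurable (fun y => T y (p y)) :=
  (isBoundedBilinearMap_apply (𝕜 := ℝ) (E := B) (F := B)).continuous.comp_stronglyMeasurable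
    (hTm.prodMk hp.stronglyMeasurable)

theorem ii_apply {B : Type*} [NormedAddCommGroup B] [NormedSpace ℝ B]
    {T : ℝ → B →L[ℝ] B} (hTm : StronglyMeasurable T) {b : ℝ → ℝ}
    (hb : ∀ u v, IntervalIntegrable b volume u v) (hTb : ∀ y, ‖T y‖ ≤ b y)
    {p : ℝ → B} (hp : Continuous p) (u v : ℝ) :
    IntervalIntegrable (fun y => T y (p y)) volume u v := by
  refine ((hb u v).mul_continuousOn hp.norm.continuousOn).mono_fun'
    (sm_apply hTm hp).aestronglyMeasurable ?_
  refine Filter.Eventually.of_forall fun y => ?_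
  exact ((T y).le_opNorm _).trans (mul_le_mul_of_nonneg_right (hTb y) (norm_nonneg _))

/-- Picard iterates. -/
noncomputable def pic {B : Type*} [NormedAddCommGroup B] [NormedSpace ℝ B]
    (T : ℝ → B →L[ℝ] B) (c : ℝ) (v : B) : ℕ → ℝ → B
  | 0 => fun _ => v
  | (k + 1) => fun x => ∫ y in c..x, T y (pic T c v k y)

theorem pic_cont {B : Type*} [NormedAddCommGroup B] [NormedSpace ℝ B]
    {T : ℝ → B →L[ℝ] B} (hTm : StronglyMeasurable T) {b : ℝ → ℝ}
    (hb : ∀ u v, IntervalIntegrable b volume u v) (hTb : ∀ y, ‖T y‖ ≤ b y) (c : ℝ) (v : B) (k : ℕ) :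
    Continuous (pic T c v k) := by
  induction k with
  | zero => exact continuous_const
  | succ k ih => exact continuous_primitive (fun u w => ii_apply hTm hb hTb ih u w) c

theorem pic_bound {B : Type*} [NormedAddCommGroup B] [NormedSpace ℝ B]
    {T : ℝ → B →L[ℝ] B} (hTm : StronglyMeasurable T) {b : ℝ → ℝ}
    (hb : ∀ u v, IntervalIntegrable b volume u v) (hTb : ∀ y, ‖T y‖ ≤ b y) (c : ℝ) (v : B) (k : ℕ)
    (x : ℝ) (hx : c ≤ x) :
    ‖pic T c v k x‖ ≤ (∫ z in c..x, b z) ^ k / k.factorial * ‖v‖ := by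
  induction k generalizing x with
  | zero => simp [pic]
  | succ k ih =>
    rw [← integral_pow_primitive (hb c x) k, ← intervalIntegral.integral_mul_const]
    have hcont : Continuous fun y => ∫ z in c..y, b z := continuous_primitive hb c
    refine norm_integral_le_of_norm_le hx ?_ ?_
    · refine Filter.Eventually.of_forall fun y hy => ?_
      refine ((T y).le_opNorm _).trans ?_
      rw [mul_assoc]
      exact mul_le_mul (hTb y) (ih y hy.1.le) (norm_nonneg _) ((norm_nonneg _).trans (hTb y))
    · exact ((hb c x).mul_continuousOn ((hcont.pow k).div_const _).continuousOn).mul_const _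

theorem ode_exists {B : Type*} [NormedAddCommGroup B] [NormedSpace ℝ B] [CompleteSpace B]
    {T : ℝ → B →L[ℝ] B} (hTm : StronglyMeasurable T) {b : ℝ → ℝ}
    (hb : ∀ u v, IntervalIntegrable b volume u v) (hTb : ∀ y, ‖T y‖ ≤ b y)
    {c d : ℝ} (hcd : c ≤ d) (v : B) :
    ∃ Z : ℝ → B, Continuous Z ∧ (∃ C, ∀ x, ‖Z x‖ ≤ C) ∧
      (∀ x ∈ Icc c d, Z x = v + ∫ y in c..x, T y (Z y)) ∧
      ∀ x ∈ Icc c d, ‖Z x‖ ≤ Real.exp (∫ y in c..d, b y) * ‖v‖ := by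
  have hb0 : ∀ y, 0 ≤ b y := fun y => (norm_nonneg _).trans (hTb y)
  set h : ℝ := ∫ y in c..d, b y with hh
  have hmono : ∀ x ∈ Icc c d, (∫ z in c..x, b z) ≤ h := fun x hx =>
    integral_mono_interval le_rfl hx.1 hx.2 (Filter.Eventually.of_forall hb0) (hb _ _)
  have hnn : ∀ x ∈ Icc c d, 0 ≤ (∫ z in c..x, b z) := fun x hx =>
    integral_nonneg hx.1 fun y _ => hb0 y
  have hB : ∀ k, ∀ x ∈ Icc c d, ‖pic T c v k x‖ ≤ h ^ k / k.factorial * ‖v‖ := by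
    intro k x hx
    refine (pic_bound hTm hb hTb c v k x hx.1).trans ?_
    have h1 := hmono x hx
    have h2 := hnn x hx
    gcongr
  have hS : HasSum (fun k : ℕ => h ^ k / k.factorial * ‖v‖) (Real.exp h * ‖v‖) := by
    have := (NormedSpace.expSeries_div_hasSum_exp h).mul_right ‖v‖
    rwa [← Real.exp_eq_exp_ℝ] at this
  set Z0 : ℝ → B := fun x => ∑' k, pic T c v k x with hZ0
  have hsum : ∀ x ∈ Icc c d, HasSum (fun k => pic T c v k x) (Z0 x) := fun x hx =>
    (Summable.of_norm_bounded hS.summable (fun k => hB k x hx)).hasSum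
  have hZ0c : ContinuousOn Z0 (Icc c d) :=
    continuousOn_tsum (fun k => (pic_cont hTm hb hTb c v k).continuousOn) hS.summable hB
  have hZ0b : ∀ x ∈ Icc c d, ‖Z0 x‖ ≤ Real.exp h * ‖v‖ := fun x hx =>
    tsum_of_norm_bounded hS (fun k => hB k x hx)
  have hZ0e : ∀ x ∈ Icc c d, Z0 x = v + ∫ y in c..x, T y (Z0 y) := by
    intro x hx
    have hI : HasSum (fun k => ∫ y in c..x, T y (pic T c v k y)) (∫ y in c..x, T y (Z0 y)) := by
      have hsub : ∀ y ∈ uIoc c x, y ∈ Icc c d := fun y hy => by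
        rw [uIoc_of_le hx.1] at hy; exact ⟨hy.1.le, hy.2.trans hx.2⟩
      refine intervalIntegral.hasSum_integral_of_dominated_convergence
        (fun k y => b y * (h ^ k / k.factorial * ‖v‖)) ?_ ?_ ?_ ?_ ?_
      · intro k
        exact (sm_apply hTm (pic_cont hTm hb hTb c v k)).aestronglyMeasurable
      · intro k
        refine Filter.Eventually.of_forall fun y hy => ((T y).le_opNorm _).trans ?_
        exact mul_le_mul (hTb y) (hB k y (hsub y hy)) (norm_nonneg _) (hb0 y)
      · exact Filter.Eventually.of_forall fun y _ => hS.summable.mul_left _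
      · have : (fun y => ∑' k : ℕ, b y * (h ^ k / k.factorial * ‖v‖))
            = fun y => b y * (Real.exp h * ‖v‖) := by
          funext y; rw [tsum_mul_left, hS.tsum_eq]
        rw [this]
        exact (hb c x).mul_const _
      · exact Filter.Eventually.of_forall fun y hy => (T y).hasSum (hsum y (hsub y hy))
    have h2 := (hasSum_nat_add_iff' (f := fun k => pic T c v k x) 1).2 (hsum x hx)
    have h3 := h2.unique hI
    simp only [Finset.range_one, Finset.sum_singleton, pic] at h3
    rw [← h3]; abel
  refine ⟨fun x => Z0 (projIcc c d hcd x), ?_, ⟨Real.exp h * ‖v‖, fun x => hZ0b _ (projIcc c d hcd x).2⟩,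
    fun x hx => ?_, fun x _ => hZ0b _ (projIcc c d hcd x).2⟩
  · exact hZ0c.comp_continuous (continuous_subtype_val.comp continuous_projIcc)
      (fun x => (projIcc c d hcd x).2)
  · simp only
    rw [projIcc_of_mem hcd hx]
    simp only
    rw [hZ0e x hx]
    congr 1
    refine integral_congr fun y hy => ?_
    rw [uIcc_of_le hx.1] at hy
    have hy' : y ∈ Icc c d := ⟨hy.1, hy.2.trans hx.2⟩
    rw [projIcc_of_mem hcd hy']

theorem resolvent_exists {B : Type*} [NormedRing B] [NormedAlgebra ℝ B] [CompleteSpace B]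
    (h1 : ‖(1 : B)‖ ≤ 1)
    {g : ℝ → B} (hgm : StronglyMeasurable g) {M : ℝ} (hM : ∀ x, ‖g x‖ ≤ M)
    {c d : ℝ} (hcd : c ≤ d) :
    ∃ Z R : ℝ → B, Continuous Z ∧ Continuous R ∧ (∃ C, ∀ x, ‖Z x‖ ≤ C) ∧ (∃ C, ∀ x, ‖R x‖ ≤ C) ∧
      (∀ x ∈ Icc c d, Z x = 1 + ∫ y in c..x, g y * Z y) ∧
      (∀ x ∈ Icc c d, R x = 1 + ∫ y in c..x, -(R y * g y)) ∧
      (∀ x ∈ Icc c d, ‖Z x‖ ≤ Real.exp (∫ y in c..d, ‖g y‖)) ∧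
      (∀ x ∈ Icc c d, ‖R x‖ ≤ Real.exp (∫ y in c..d, ‖g y‖)) ∧
      (∀ x ∈ Icc c d, R x * Z x = 1) ∧ (∀ x ∈ Icc c d, Z x * R x = 1) := by
  have hb : ∀ u v, IntervalIntegrable (fun y => ‖g y‖) volume u v := fun u v =>
    (ii_of_bdd hgm hM u v).norm
  obtain ⟨Z, Zc, ⟨C, hC⟩, Ze, Zb⟩ := ode_exists (T := fun y => ContinuousLinearMap.mul ℝ B (g y))
    ((ContinuousLinearMap.mul ℝ B).continuous.comp_stronglyMeasurable hgm) hb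
    (fun y => ContinuousLinearMap.opNorm_mul_apply_le ℝ B (g y)) hcd (1 : B)
  obtain ⟨R, Rc, ⟨D, hD⟩, Re, Rb⟩ := ode_exists
    (T := fun y => -((ContinuousLinearMap.mul ℝ B).flip (g y)))
    (((ContinuousLinearMap.mul ℝ B).flip.continuous.comp_stronglyMeasurable hgm).neg) hb
    (fun y => by
      rw [norm_neg]
      refine ContinuousLinearMap.opNorm_le_bound _ (norm_nonneg _) fun x => ?_
      simpa [mul_comm] using norm_mul_le x (g y)) hcd (1 : B)
  simp only [ContinuousLinearMap.mul_apply', neg_apply,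
    ContinuousLinearMap.flip_apply] at Ze Re
  have hE : ∀ {r : ℝ}, r ≤ Real.exp (∫ y in c..d, ‖g y‖) * ‖(1 : B)‖ →
      r ≤ Real.exp (∫ y in c..d, ‖g y‖) := fun h =>
    h.trans (mul_le_of_le_one_right (Real.exp_pos _).le h1)
  have Zi : ∀ u v, IntervalIntegrable (fun y => g y * Z y) volume u v := fun u v =>
    (ii_of_bdd hgm hM u v).mul_continuousOn Zc.continuousOn
  have Ri : ∀ u v, IntervalIntegrable (fun y => -(R y * g y)) volume u v := fun u v =>
    ((ii_of_bdd hgm hM u v).continuousOn_mul Rc.continuousOn).neg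
  have hcc : c ∈ Icc c d := ⟨le_rfl, hcd⟩
  have Z1 : Z c = 1 := by simpa using Ze c hcc
  have R1 : R c = 1 := by simpa using Re c hcc
  have hRZ : ∀ x ∈ Icc c d, R x * Z x = 1 := by
    intro x hx
    have := prod_rule (P := R) (Q := Z) hx.1 (Ri c x) (Zi c x)
      (fun y hy => by rw [Re y ⟨hy.1, hy.2.trans hx.2⟩, R1]; abel)
      (fun y hy => by rw [Ze y ⟨hy.1, hy.2.trans hx.2⟩, Z1]; abel)
    have h0 : ∀ y, -(R y * g y) * Z y + R y * (g y * Z y) = 0 := fun y => by noncomm_ring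
    simp only [h0, R1, Z1, intervalIntegral.integral_zero, mul_one] at this
    exact sub_eq_zero.1 this
  refine ⟨Z, R, Zc, Rc, ⟨C, hC⟩, ⟨D, hD⟩, Ze, Re, fun x hx => hE (Zb x hx),
    fun x hx => hE (Rb x hx), hRZ, ?_⟩
  -- connectedness argument
  have hpre : IsPreconnected (Icc c d) := isPreconnected_Icc
  have hid : ∀ x ∈ Icc c d, ‖1 - Z x * R x‖ < 1 → Z x * R x = 1 := by
    intro x hx hlt
    have hu : IsUnit (1 - (1 - Z x * R x)) := isUnit_one_sub_of_norm_lt_one hlt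
    rw [sub_sub_cancel] at hu
    have hidem : (Z x * R x) * (Z x * R x) = Z x * R x * 1 := by
      calc (Z x * R x) * (Z x * R x) = Z x * (R x * Z x) * R x := by noncomm_ring
        _ = Z x * R x * 1 := by rw [hRZ x hx]; simp
    exact hu.mul_left_cancel hidem
  have hcont : Continuous fun x => 1 - Z x * R x := continuous_const.sub (Zc.mul Rc)
  intro x hx
  by_contra hne
  obtain ⟨y, hy, hy1, hy2⟩ := hpre {x | ‖1 - Z x * R x‖ < 1} {x | Z x * R x ≠ 1}
    (isOpen_lt hcont.norm continuous_const)
    (isOpen_ne_fun (Zc.mul Rc) continuous_const)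
    (fun y _ => by
      by_cases h : Z y * R y = 1
      · left; simp [h]
      · right; exact h)
    ⟨c, hcc, by simp [Z1, R1]⟩ ⟨x, hx, hne⟩
  exact hy2 (hid y hy hy1)

end S9


namespace S9

theorem compare {B : Type*} [NormedRing B] [NormedAlgebra ℝ B] [CompleteSpace B]
    (h1 : ‖(1 : B)‖ ≤ 1)
    {g₁ g₂ : ℝ → B} (hm₁ : StronglyMeasurable g₁) (hm₂ : StronglyMeasurable g₂) {M₁ M₂ : ℝ}
    (hM₁ : ∀ x, ‖g₁ x‖ ≤ M₁) (hM₂ : ∀ x, ‖g₂ x‖ ≤ M₂)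
    {c d N : ℝ} {Z R : ℝ → B} (Zc : Continuous Z) (Rc : Continuous R)
    (Ze : ∀ x ∈ Icc c d, Z x = 1 + ∫ y in c..x, g₁ y * Z y)
    (Re : ∀ x ∈ Icc c d, R x = 1 + ∫ y in c..x, -(R y * g₂ y))
    (Zb : ∀ x ∈ Icc c d, ‖Z x‖ ≤ N) (Rb : ∀ x ∈ Icc c d, ‖R x‖ ≤ N)
    {x : ℝ} (hx : x ∈ Icc c d) :
    ‖R x * Z x‖ ≤ Real.exp (N ^ 2 * ∫ y in c..d, ‖g₂ y - g₁ y‖) := by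
  have Zi : ∀ u v, IntervalIntegrable (fun y => g₁ y * Z y) volume u v := fun u v =>
    (ii_of_bdd hm₁ hM₁ u v).mul_continuousOn Zc.continuousOn
  have Ri : ∀ u v, IntervalIntegrable (fun y => -(R y * g₂ y)) volume u v := fun u v =>
    ((ii_of_bdd hm₂ hM₂ u v).continuousOn_mul Rc.continuousOn).neg
  have hcc : c ∈ Icc c d := ⟨le_rfl, hx.1.trans hx.2⟩
  have Z1 : Z c = 1 := by simpa using Ze c hcc
  have R1 : R c = 1 := by simpa using Re c hcc
  have hN : 0 ≤ N := (norm_nonneg _).trans (Zb c hcc)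
  have key := prod_rule (P := R) (Q := Z) hx.1 (Ri c x) (Zi c x)
      (fun y hy => by rw [Re y ⟨hy.1, hy.2.trans hx.2⟩, R1]; abel)
      (fun y hy => by rw [Ze y ⟨hy.1, hy.2.trans hx.2⟩, Z1]; abel)
  have hgi : ∀ u v, IntervalIntegrable (fun y => ‖g₂ y - g₁ y‖) volume u v := fun u v =>
    ((ii_of_bdd hm₂ hM₂ u v).sub (ii_of_bdd hm₁ hM₁ u v)).norm
  have hle : ‖R x * Z x - R c * Z c‖ ≤ N ^ 2 * ∫ y in c..x, ‖g₂ y - g₁ y‖ := by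
    rw [key, ← intervalIntegral.integral_const_mul]
    refine norm_integral_le_of_norm_le hx.1 (Filter.Eventually.of_forall fun y hy => ?_)
      ((hgi c x).const_mul _)
    have hy' : y ∈ Icc c d := ⟨hy.1.le, hy.2.trans hx.2⟩
    have e : -(R y * g₂ y) * Z y + R y * (g₁ y * Z y) = -(R y * (g₂ y - g₁ y) * Z y) := by
      noncomm_ring
    rw [e, norm_neg]
    calc ‖R y * (g₂ y - g₁ y) * Z y‖ ≤ ‖R y‖ * ‖g₂ y - g₁ y‖ * ‖Z y‖ :=
          (norm_mul_le _ _).trans (mul_le_mul_of_nonneg_right (norm_mul_le _ _) (norm_nonneg _))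
      _ ≤ N * ‖g₂ y - g₁ y‖ * N := by
          have := Zb y hy'; have := Rb y hy'; gcongr
      _ = N ^ 2 * ‖g₂ y - g₁ y‖ := by ring
  have hmono : (∫ y in c..x, ‖g₂ y - g₁ y‖) ≤ ∫ y in c..d, ‖g₂ y - g₁ y‖ :=
    integral_mono_interval le_rfl hx.1 hx.2
      (Filter.Eventually.of_forall fun _ => norm_nonneg _) (hgi _ _)
  have h2 : ‖R x * Z x‖ ≤ ‖R x * Z x - R c * Z c‖ + 1 := by
    have := norm_add_le (R x * Z x - R c * Z c) (1 : B)
    rw [R1, Z1, mul_one, sub_add_cancel] at this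
    rw [R1, Z1, mul_one]; linarith
  have h3 := mul_le_mul_of_nonneg_left hmono (sq_nonneg N)
  linarith [Real.add_one_le_exp (N ^ 2 * ∫ y in c..d, ‖g₂ y - g₁ y‖)]

theorem piece {B : Type*} [NormedRing B] [NormedAlgebra ℝ B] [CompleteSpace B]
    {g : ℝ → B} (hm : StronglyMeasurable g) {M : ℝ} (hM : ∀ x, ‖g x‖ ≤ M)
    {c d C : ℝ} {R : ℝ → B} (Rc : Continuous R) (hC : ∀ x, ‖R x‖ ≤ C)
    (Re : ∀ x ∈ Icc c d, R x = 1 + ∫ y in c..x, -(R y * g y))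
    {f f' : ℝ → ℝ} {α β : ℝ} (hαβ : α ≤ β) (hf : AbsolutelyContinuousOnInterval f α β)
    (hf' : ∀ᵐ x, x ∈ Icc α β → HasDerivAt f (f' x) x)
    (hfK : ∀ t ∈ Icc α β, f t ∈ Icc c d)
    {A X : ℝ → B} (hA : IntervalIntegrable A volume α β)
    (hAe : ∀ᵐ t, t ∈ Icc α β → A t = f' t • g (f t))
    (hX : ContinuousOn X (Icc α β))
    (hXe : ∀ t ∈ Icc α β, X t - X α = ∫ τ in α..t, A τ * X τ) :
    R (f β) * X β = R (f α) * X α := by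
  have hC0 : 0 ≤ C := (norm_nonneg _).trans (hC 0)
  have hRg : StronglyMeasurable fun y => -(R y * g y) := (Rc.stronglyMeasurable.mul hm).neg
  have hRgb : ∀ y, ‖-(R y * g y)‖ ≤ C * M := fun y => by
    rw [norm_neg]
    exact (norm_mul_le _ _).trans (mul_le_mul (hC y) (hM y) (norm_nonneg _) hC0)
  have hu : uIcc α β = Icc α β := uIcc_of_le hαβ
  have hα : α ∈ Icc α β := ⟨le_rfl, hαβ⟩
  have hp : IntervalIntegrable (fun t => f' t • -(R (f t) * g (f t))) volume α β :=
    (intervalIntegrable_iff_integrableOn_Icc_of_le hαβ).2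
      (subst_integrable hRg hRgb hαβ hf hf')
  have hq : IntervalIntegrable (fun t => A t * X t) volume α β :=
    hA.mul_continuousOn (by rwa [hu])
  have key := prod_rule (P := fun t => R (f t)) (Q := X) hαβ hp hq (fun x hx => by
      have hfx : AbsolutelyContinuousOnInterval f α x := hf.mono (by
        rw [hu, uIcc_of_le hx.1]; exact Icc_subset_Icc_right hx.2)
      have := subst_integral hRg hRgb hx.1 hfx (by
        filter_upwards [hf'] with t ht h using ht ⟨h.1, h.2.trans hx.2⟩)
      rw [this, Re _ (hfK x hx), Re _ (hfK α hα), add_sub_add_left_eq_sub,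
        integral_interval_sub_left (ii_of_bdd hRg hRgb _ _) (ii_of_bdd hRg hRgb _ _)]) hXe
  rw [← sub_eq_zero]
  rw [key]
  refine integral_zero_ae ?_
  filter_upwards [hAe] with t ht h
  rw [uIoc_of_le hαβ] at h
  rw [ht ⟨h.1.le, h.2⟩]
  simp only [smul_neg, neg_mul, smul_mul_assoc, mul_smul_comm, mul_assoc]
  simp

theorem chain {n : ℕ} {q w : ℕ → ℝ} (hw : ∀ j, 0 ≤ w j)
    (h0 : ∀ j, 0 ≤ q j)
    (hup : ∀ j, j + 1 < n → q (j + 1) ≤ Real.exp (w (j + 1)) * q j)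
    (hdn : ∀ j, j + 1 < n → q j ≤ Real.exp (w (j + 1)) * q (j + 1))
    {i j : ℕ} (hi : i < n) (hj : j < n) :
    q j ≤ Real.exp (∑ k ∈ Finset.Ico 1 n, w k) * q i := by
  have main : ∀ i j, i ≤ j → j < n →
      q j ≤ Real.exp (∑ k ∈ Finset.Ico (i + 1) (j + 1), w k) * q i ∧
      q i ≤ Real.exp (∑ k ∈ Finset.Ico (i + 1) (j + 1), w k) * q j := by
    intro i j hij
    induction j, hij using Nat.le_induction with
    | base => intro _; simp
    | succ j hij ih =>
      intro hj
      obtain ⟨a1, a2⟩ := ih (by omega)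
      have b1 := hup j hj
      have b2 := hdn j hj
      rw [Finset.sum_Ico_succ_top (by omega), Real.exp_add]
      constructor
      · calc q (j + 1) ≤ Real.exp (w (j + 1)) * q j := b1
          _ ≤ Real.exp (w (j + 1)) * (Real.exp (∑ k ∈ Finset.Ico (i + 1) (j + 1), w k) * q i) := by
            gcongr
          _ = _ := by ring
      · calc q i ≤ Real.exp (∑ k ∈ Finset.Ico (i + 1) (j + 1), w k) * q j := a2
          _ ≤ Real.exp (∑ k ∈ Finset.Ico (i + 1) (j + 1), w k) *
              (Real.exp (w (j + 1)) * q (j + 1)) := by gcongr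
          _ = _ := by ring
  have hsum : ∀ i j, j < n → ∑ k ∈ Finset.Ico (i + 1) (j + 1), w k ≤ ∑ k ∈ Finset.Ico 1 n, w k :=
    fun i j hj => Finset.sum_le_sum_of_subset_of_nonneg
      (Finset.Ico_subset_Ico (by omega) (by omega)) (fun k _ _ => hw k)
  rcases le_total i j with h | h
  · refine (main i j h hj).1.trans (mul_le_mul_of_nonneg_right ?_ (h0 i))
    exact Real.exp_le_exp.2 (hsum i j hj)
  · refine (main j i h hi).2.trans (mul_le_mul_of_nonneg_right ?_ (h0 i))
    exact Real.exp_le_exp.2 (hsum j i hi)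

theorem exists_rep {B : Type*} [NormedAddCommGroup B] {G : ℝ → B} {J : Set ℝ}
    (hG : AEStronglyMeasurable G (volume.restrict J)) {c d : ℝ} (hK : Icc c d ⊆ J) {M : ℝ}
    (hM : ∀ᵐ t ∂(volume.restrict (Icc c d)), ‖G t‖ ≤ M) :
    ∃ (g : ℝ → B) (M' : ℝ), StronglyMeasurable g ∧ (∀ x, ‖g x‖ ≤ M') ∧
      ∀ᵐ x, x ∈ Icc c d → G x = g x := by
  have h := hG.mono_measure (Measure.restrict_mono hK le_rfl)
  have hs : MeasurableSet {x | ‖h.mk G x‖ ≤ M} :=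
    measurableSet_le h.stronglyMeasurable_mk.norm.measurable measurable_const
  refine ⟨{x | ‖h.mk G x‖ ≤ M}.indicator (h.mk G), max M 0, h.stronglyMeasurable_mk.indicator hs,
    fun x => ?_, ?_⟩
  · by_cases hx : x ∈ {x | ‖h.mk G x‖ ≤ M}
    · rw [indicator_of_mem hx]; exact le_max_of_le_left hx
    · rw [indicator_of_notMem hx]; simp
  · have h2 := h.ae_eq_mk
    rw [Filter.EventuallyEq, ae_restrict_iff' measurableSet_Icc] at h2
    rw [ae_restrict_iff' measurableSet_Icc] at hM
    filter_upwards [h2, hM] with x e b hx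
    have : x ∈ {x | ‖h.mk G x‖ ≤ M} := by
      change ‖h.mk G x‖ ≤ M
      rw [← e hx]; exact b hx
    rw [indicator_of_mem this, e hx]

theorem int_le {B : Type*} [NormedAddCommGroup B] {H h : ℝ → B} {J : Set ℝ}
    (hH : IntegrableOn H J) {c d : ℝ} (hcd : c ≤ d) (hK : Icc c d ⊆ J)
    (he : ∀ᵐ x, x ∈ Icc c d → H x = h x) :
    ∫ x in c..d, ‖h x‖ ≤ ∫ x in J, ‖H x‖ := by
  rw [intervalIntegral.integral_of_le hcd, ← integral_Icc_eq_integral_Ioc]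
  have : ∫ x in Icc c d, ‖h x‖ = ∫ x in Icc c d, ‖H x‖ := by
    refine setIntegral_congr_ae measurableSet_Icc ?_
    filter_upwards [he] with x e hx
    rw [e hx]
  rw [this]
  exact setIntegral_mono_set hH.norm (Filter.Eventually.of_forall fun _ => norm_nonneg _)
    (Filter.Eventually.of_forall hK)

end S9

namespace S9

theorem ac_conv {f : ℝ → ℝ} {a b : ℝ} (hab : a ≤ b) (hf : AbsolutelyContinuousOn f (Icc a b)) :
    AbsolutelyContinuousOnInterval f a b := by
  rw [absolutelyContinuousOnInterval_iff]
  intro ε hε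
  obtain ⟨δ, hδ, h⟩ := hf ε hε
  refine ⟨δ, hδ, fun E hE hs => ?_⟩
  obtain ⟨hE1, hE2⟩ := hE
  rw [uIcc_of_le hab] at hE1
  have hs' : ∀ i, max (E.2 i).1 (E.2 i).2 - min (E.2 i).1 (E.2 i).2
      = dist (E.2 i).1 (E.2 i).2 := fun i => by
    rw [max_sub_min_eq_abs', Real.dist_eq]
  have hd' : ∀ i, |f (max (E.2 i).1 (E.2 i).2) - f (min (E.2 i).1 (E.2 i).2)|
      = dist (f (E.2 i).1) (f (E.2 i).2) := fun i => by
    rw [Real.dist_eq]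
    rcases le_total (E.2 i).1 (E.2 i).2 with h | h
    · rw [max_eq_right h, min_eq_left h, abs_sub_comm]
    · rw [max_eq_left h, min_eq_right h]
  have := h E.1 (fun i => min (E.2 i).1 (E.2 i).2) (fun i => max (E.2 i).1 (E.2 i).2) ?_ ?_ ?_
  · simpa only [hd'] using this
  · intro i hi
    have := hE1 i (Finset.mem_range.2 hi)
    refine ⟨?_, ?_, min_le_max⟩
    · rcases min_choice (E.2 i).1 (E.2 i).2 with h | h <;> rw [h]
      exacts [this.1, this.2]
    · rcases max_choice (E.2 i).1 (E.2 i).2 with h | h <;> rw [h]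
      exacts [this.1, this.2]
  · intro i hi j hj hij
    have := hE2 (by simpa using hi) (by simpa using hj) hij
    rw [Function.onFun, Set.disjoint_iff_inter_eq_empty] at this
    refine Set.subset_eq_empty ?_ this
    exact inter_subset_inter Ioo_subset_Ioc_self Ioo_subset_Ioc_self
  · simpa only [hs'] using hs

theorem a_mono {n : ℕ} {a : ℕ → ℝ} (ha : ∀ i < n, a i < a (i + 1)) {i j : ℕ} (hij : i ≤ j)
    (hj : j ≤ n) : a i ≤ a j := by
  induction j, hij using Nat.le_induction with
  | base => exact le_rfl
  | succ j hij ih => exact (ih (by omega)).trans (ha j (by omega)).le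

theorem locate {n : ℕ} {a : ℕ → ℝ} (hn : 0 < n) {t : ℝ} (ht : t ∈ Icc (a 0) (a n)) :
    ∃ i < n, t ∈ Icc (a i) (a (i + 1)) := by
  induction n with
  | zero => omega
  | succ n ih =>
    rcases Nat.eq_zero_or_pos n with rfl | h
    · exact ⟨0, by omega, ht⟩
    · by_cases h2 : t ≤ a n
      · obtain ⟨i, hi, h3⟩ := ih h ⟨ht.1, h2⟩
        exact ⟨i, by omega, h3⟩
      · exact ⟨n, by omega, (not_le.1 h2).le, ht.2⟩

theorem int_union {B : Type*} [NormedAddCommGroup B] {A : ℝ → B} {n : ℕ} {a : ℕ → ℝ}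
    (hn : 0 < n) (h : ∀ i < n, IntegrableOn A (Icc (a i) (a (i + 1)))) :
    IntegrableOn A (Icc (a 0) (a n)) := by
  have : IntegrableOn A (⋃ i ∈ Finset.range n, Icc (a i) (a (i + 1))) :=
    integrableOn_finset_iUnion.2 fun i hi => h i (Finset.mem_range.1 hi)
  refine this.mono_set fun t ht => ?_
  obtain ⟨i, hi, h3⟩ := locate hn ht
  simp only [mem_iUnion, Finset.mem_range]
  exact ⟨i, hi, h3⟩

theorem core {B : Type*} [NormedRing B] [NormedAlgebra ℝ B] [CompleteSpace B]
    (h1 : ‖(1 : B)‖ ≤ 1)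
    (J : Set ℝ) (hJ : J.OrdConnected) (n : ℕ) (hn : 0 < n) (a : ℕ → ℝ)
    (ha : ∀ i < n, a i < a (i + 1))
    (G : ℕ → ℝ → B)
    (hGm : ∀ i < n, LocEssBdd (G i) J)
    (hGi : ∀ i < n, IntegrableOn (G i) J)
    (N V : ℝ) (hN1 : 1 ≤ N)
    (hNb : ∀ i < n, Real.exp (∫ u in J, ‖G i u‖) ≤ N)
    (hV : V = ∑ j ∈ Finset.Ico 1 n, ∫ u in J, ‖G j u - G (j - 1) u‖)
    (f f' : ℝ → ℝ)
    (hf : AbsolutelyContinuousOnInterval f (a 0) (a n))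
    (hf' : ∀ᵐ x, x ∈ Icc (a 0) (a n) → HasDerivAt f (f' x) x)
    (hfJ : f '' Set.Icc (a 0) (a n) ⊆ J)
    (A : ℝ → B)
    (hA : ∀ i < n, ∀ t ∈ Set.Ico (a i) (a (i + 1)), A t = f' t • G i (f t)) :
    IntegrableOn A (Set.Icc (a 0) (a n)) ∧
    ∀ X : ℝ → B, ContinuousOn X (Icc (a 0) (a n)) →
      (∀ u ∈ Icc (a 0) (a n), ∀ t ∈ Icc (a 0) (a n), X t - X u = ∫ τ in u..t, A τ * X τ) →
      ∀ s ∈ Set.Icc (a 0) (a n), X s = 1 → ∀ t ∈ Set.Icc (a 0) (a n),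
        ‖X t‖ ≤ N ^ 2 * Real.exp (N ^ 2 * V) := by
  have h0n : a 0 ≤ a n := a_mono ha (Nat.zero_le n) le_rfl
  have hsub : ∀ i < n, Icc (a i) (a (i + 1)) ⊆ Icc (a 0) (a n) := fun i hi =>
    Icc_subset_Icc (a_mono ha (Nat.zero_le i) hi.le) (a_mono ha hi le_rfl)
  have hfc : ContinuousOn f (Icc (a 0) (a n)) := by
    have := hf.continuousOn; rwa [uIcc_of_le h0n] at this
  obtain ⟨c, d, hcd, hfI⟩ : ∃ c d, c ≤ d ∧ f '' Icc (a 0) (a n) = Icc c d := by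
    have := hfc.image_Icc h0n
    refine ⟨_, _, ?_, this⟩
    rw [← nonempty_Icc, ← this]
    exact (nonempty_Icc.2 h0n).image f
  have hK : Icc c d ⊆ J := hfI ▸ hfJ
  have hfK : ∀ t ∈ Icc (a 0) (a n), f t ∈ Icc c d := fun t ht => hfI ▸ mem_image_of_mem f ht
  have hcJ : c ∈ J := hK ⟨le_rfl, hcd⟩
  have hdJ : d ∈ J := hK ⟨hcd, le_rfl⟩
  have hrep : ∀ i, i < n → ∃ (g : ℝ → B) (M' : ℝ), StronglyMeasurable g ∧ (∀ x, ‖g x‖ ≤ M') ∧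
      ∀ᵐ x, x ∈ Icc c d → G i x = g x := fun i hi => by
    obtain ⟨M, hM⟩ := (hGm i hi).2 c hcJ d hdJ
    rw [uIcc_of_le hcd] at hM
    exact exists_rep (hGm i hi).1 hK hM
  choose! g M gm gM ge using hrep
  have hres := fun i (hi : i < n) => resolvent_exists h1 (gm i hi) (gM i hi) hcd
  choose! Z R Zc Rc _ RC Ze Re Zb Rb RZ ZR using hres
  have hbd : ∀ i < n, Real.exp (∫ y in c..d, ‖g i y‖) ≤ N := fun i hi =>
    (Real.exp_le_exp.2 (int_le (hGi i hi) hcd hK (ge i hi))).trans (hNb i hi)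
  have ZN : ∀ i < n, ∀ x ∈ Icc c d, ‖Z i x‖ ≤ N := fun i hi x hx => (Zb i hi x hx).trans (hbd i hi)
  have RN : ∀ i < n, ∀ x ∈ Icc c d, ‖R i x‖ ≤ N := fun i hi x hx => (Rb i hi x hx).trans (hbd i hi)
  have hfi : ∀ i < n, AbsolutelyContinuousOnInterval f (a i) (a (i + 1)) := fun i hi =>
    hf.mono (by rw [uIcc_of_le h0n, uIcc_of_le (ha i hi).le]; exact hsub i hi)
  have hfi' : ∀ i < n, ∀ᵐ x, x ∈ Icc (a i) (a (i + 1)) → HasDerivAt f (f' x) x := fun i hi => by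
    filter_upwards [hf'] with x hx h using hx (hsub i hi h)
  have hAe : ∀ i < n, ∀ᵐ t, t ∈ Icc (a i) (a (i + 1)) → A t = f' t • g i (f t) := fun i hi => by
    have h2 := ae_congr_pullback (ge i hi) (fun t ht => hfK t (hsub i hi ht)) (hfi' i hi)
    have h3 : ∀ᵐ t : ℝ, t ≠ a (i + 1) := Measure.ae_ne volume _
    filter_upwards [h2, h3] with t h2 h3 ht
    rw [hA i hi t ⟨ht.1, lt_of_le_of_ne ht.2 h3⟩, h2 ht]
  have hAi : ∀ i < n, IntegrableOn A (Icc (a i) (a (i + 1))) := fun i hi => by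
    refine (subst_integrable (gm i hi) (gM i hi) (ha i hi).le (hfi i hi) (hfi' i hi)).congr ?_
    rw [Filter.EventuallyEq, ae_restrict_iff' measurableSet_Icc]
    filter_upwards [hAe i hi] with t ht h using (ht h).symm
  refine ⟨int_union hn hAi, ?_⟩
  intro X Xc Xe s hs Xs t ht
  have hmem : ∀ i < n, a i ∈ Icc (a 0) (a n) := fun i hi => hsub i hi ⟨le_rfl, (ha i hi).le⟩
  have hmem' : ∀ i < n, a (i + 1) ∈ Icc (a 0) (a n) := fun i hi => hsub i hi ⟨(ha i hi).le, le_rfl⟩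
  have hp : ∀ i < n, ∀ β ∈ Icc (a i) (a (i + 1)),
      R i (f β) * X β = R i (f (a i)) * X (a i) := fun i hi β hβ => by
    obtain ⟨C, hC⟩ := RC i hi
    have hs1 : Icc (a i) β ⊆ Icc (a i) (a (i + 1)) := Icc_subset_Icc_right hβ.2
    refine piece (gm i hi) (gM i hi) (Rc i hi) hC (Re i hi) hβ.1 (f' := f') (A := A) ?_ ?_ ?_ ?_ ?_ ?_ ?_
    · exact (hfi i hi).mono (by rw [uIcc_of_le hβ.1, uIcc_of_le (ha i hi).le]; exact hs1)
    · filter_upwards [hfi' i hi] with x hx h using hx (hs1 h)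
    · exact fun t ht => hfK t (hsub i hi (hs1 ht))
    · exact (intervalIntegrable_iff_integrableOn_Icc_of_le hβ.1).2 ((hAi i hi).mono_set hs1)
    · filter_upwards [hAe i hi] with x hx h using hx (hs1 h)
    · exact Xc.mono (hs1.trans (hsub i hi))
    · exact fun t ht => Xe _ (hmem i hi) _ (hsub i hi (hs1 ht))
  have hN0 : 0 ≤ N := zero_le_one.trans hN1
  have hX : ∀ i < n, ∀ β ∈ Icc (a i) (a (i + 1)),
      X β = Z i (f β) * (R i (f (a i)) * X (a i)) := fun i hi β hβ => by
    rw [← hp i hi β hβ, ← mul_assoc, ZR i hi _ (hfK β (hsub i hi hβ)), one_mul]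
  set w : ℕ → ℝ := fun j => N ^ 2 * ∫ u in J, ‖G j u - G (j - 1) u‖ with hw
  have hcmp : ∀ i j, i < n → j < n → ∀ x ∈ Icc c d, ‖R j x * Z i x‖ ≤
      Real.exp (N ^ 2 * ∫ u in J, ‖G j u - G i u‖) := fun i j hi hj x hx => by
    refine (S9.compare h1 (gm i hi) (gm j hj) (gM i hi) (gM j hj) (Zc i hi) (Rc j hj)
      (Ze i hi) (Re j hj) (ZN i hi) (RN j hj) hx).trans ?_
    refine Real.exp_le_exp.2 (mul_le_mul_of_nonneg_left ?_ (by positivity))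
    refine int_le (H := fun u => G j u - G i u) ((hGi j hj).sub (hGi i hi)) hcd hK ?_
    filter_upwards [ge i hi, ge j hj] with x e1 e2 h
    rw [e1 h, e2 h]
  obtain ⟨i, hi, hsi⟩ := locate hn hs
  obtain ⟨j, hj, htj⟩ := locate hn ht
  have hch := chain (n := n) (q := fun j => ‖R j (f (a j)) * X (a j)‖) (w := w)
    (fun j => by positivity) (fun j => norm_nonneg _) ?_ ?_ hi hj
  · have hq := hch
    beta_reduce at hq
    rw [← hp i hi s hsi, Xs, mul_one] at hq
    rw [hX j hj t htj]
    have e : ∑ k ∈ Finset.Ico 1 n, w k = N ^ 2 * V := by rw [hV, Finset.mul_sum]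
    rw [e] at hq
    calc _ ≤ ‖Z j (f t)‖ * ‖R j (f (a j)) * X (a j)‖ := norm_mul_le _ _
      _ ≤ N * (Real.exp (N ^ 2 * V) * N) := by
        refine mul_le_mul (ZN j hj _ (hfK t ht)) (hq.trans ?_) (norm_nonneg _) hN0
        exact mul_le_mul_of_nonneg_left (RN i hi _ (hfK s hs)) (Real.exp_pos _).le
      _ = _ := by ring
  · intro j hj
    have hj' : j < n := by omega
    beta_reduce
    rw [hX j hj' (a (j + 1)) ⟨(ha j hj').le, le_rfl⟩, ← mul_assoc]
    refine (norm_mul_le _ _).trans (mul_le_mul_of_nonneg_right ?_ (norm_nonneg _))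
    exact hcmp j (j + 1) hj' hj _ (hfK _ (hmem _ hj))
  · intro j hj
    have hj' : j < n := by omega
    beta_reduce
    rw [← hp j hj' (a (j + 1)) ⟨(ha j hj').le, le_rfl⟩]
    have e : R j (f (a (j + 1))) * X (a (j + 1)) = (R j (f (a (j + 1))) * Z (j + 1) (f (a (j + 1))))
        * (R (j + 1) (f (a (j + 1))) * X (a (j + 1))) := by
      rw [mul_assoc, ← hX (j + 1) hj _ ⟨le_rfl, (ha _ hj).le⟩]
    rw [e]
    refine (norm_mul_le _ _).trans (mul_le_mul_of_nonneg_right ?_ (norm_nonneg _))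
    refine (hcmp (j + 1) j hj hj' _ (hfK _ (hmem _ hj))).trans (le_of_eq ?_)
    simp only [hw, Nat.add_sub_cancel]
    simp only [norm_sub_rev (G j _)]

end S9

/-- key stability lemma. Piecewise substituted systems
`A(t) = f'(t)·Gᵢ(f(t))` on `[aᵢ, a_{i+1})` are uniformly bistable, with the explicit
bound `N² exp(N^{3+2N} V)`. -/
theorem stmt9 {E : Type*} [NormedAddCommGroup E] [NormedSpace ℝ E] [CompleteSpace E]
    (J : Set ℝ) (hJ : J.OrdConnected) (n : ℕ) (a : ℕ → ℝ)
    (ha : ∀ i < n, a i < a (i + 1))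
    (G : ℕ → ℝ → E →L[ℝ] E)
    (hGm : ∀ i < n, LocEssBdd (G i) J)
    (hGi : ∀ i < n, IntegrableOn (G i) J)
    (N V : ℝ)
    (hN : N = Real.exp (⨆ i : Fin n, ∫ u in J, ‖G i u‖))
    (hV : V = ∑ j ∈ Finset.Ico 1 n, ∫ u in J, ‖G j u - G (j - 1) u‖)
    (f f' : ℝ → ℝ)
    (hf : AbsolutelyContinuousOn f (Set.Icc (a 0) (a n)))
    (hf' : IsDerivWithinOf f' f (Set.Icc (a 0) (a n)))
    (hfJ : f '' Set.Icc (a 0) (a n) ⊆ J)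
    (A : ℝ → E →L[ℝ] E)
    (hA : ∀ i < n, ∀ t ∈ Set.Ico (a i) (a (i + 1)), A t = f' t • G i (f t)) :
    IntegrableOn A (Set.Icc (a 0) (a n)) ∧
    ∀ X, IsEvolutionOperator (Set.Icc (a 0) (a n)) A X →
      ∀ s ∈ Set.Icc (a 0) (a n), ∀ t ∈ Set.Icc (a 0) (a n), s ≤ t →
        ‖X t s‖ ≤ N ^ 2 * Real.exp (N ^ (3 + 2 * N) * V) ∧
        ‖X s t‖ ≤ N ^ 2 * Real.exp (N ^ (3 + 2 * N) * V) := by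
  have h1 : ‖(1 : E →L[ℝ] E)‖ ≤ 1 := ContinuousLinearMap.norm_id_le
  have h0n : a 0 ≤ a n := S9.a_mono ha (Nat.zero_le n) le_rfl
  have hN1 : 1 ≤ N := by
    rw [hN]
    exact Real.one_le_exp (Real.iSup_nonneg fun i => integral_nonneg fun _ => norm_nonneg _)
  have hV0 : 0 ≤ V := by
    rw [hV]
    exact Finset.sum_nonneg fun i _ => integral_nonneg fun _ => norm_nonneg _
  rcases Nat.eq_zero_or_pos n with rfl | hn
  · refine ⟨?_, ?_⟩
    · rw [Icc_self, IntegrableOn, Measure.restrict_singleton]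
      simp
    · intro X hX s hs t ht _
      rw [Icc_self, mem_singleton_iff] at hs ht
      subst hs
      subst ht
      have h2 : ‖X (a 0) (a 0)‖ ≤ N ^ 2 * Real.exp (N ^ (3 + 2 * N) * V) := by
        rw [(hX (a 0) (by simp)).2.1]
        refine h1.trans ?_
        exact one_le_mul_of_one_le_of_one_le (one_le_pow₀ hN1)
          (Real.one_le_exp (mul_nonneg (Real.rpow_nonneg (zero_le_one.trans hN1) _) hV0))
      exact ⟨h2, h2⟩
  · have hac := S9.ac_conv h0n hf
    have hd : ∀ᵐ x, x ∈ Icc (a 0) (a n) → HasDerivAt f (f' x) x := by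
      have h2 : ∀ᵐ t : ℝ, t ≠ a 0 := Measure.ae_ne volume _
      have h3 : ∀ᵐ t : ℝ, t ≠ a n := Measure.ae_ne volume _
      filter_upwards [hac.ae_differentiableAt, h2, h3] with x hx h2 h3 h
      rw [uIcc_of_le h0n] at hx
      have hnh : Icc (a 0) (a n) ∈ nhds x :=
        Icc_mem_nhds (lt_of_le_of_ne h.1 (Ne.symm h2)) (lt_of_le_of_ne h.2 h3)
      exact ((hf' x h).1 (hx h).differentiableWithinAt).hasDerivAt hnh
    have hNb : ∀ i < n, Real.exp (∫ u in J, ‖G i u‖) ≤ N := fun i hi => by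
      rw [hN]
      exact Real.exp_le_exp.2 (le_ciSup (f := fun i : Fin n => ∫ u in J, ‖G i u‖)
        (Set.finite_range _).bddAbove ⟨i, hi⟩)
    obtain ⟨hI, hb⟩ := S9.core h1 J hJ n hn a ha G hGm hGi N V hN1 hNb hV f f' hac hd hfJ A hA
    refine ⟨hI, ?_⟩
    intro X hX s hs t ht _
    have hle : N ^ 2 * Real.exp (N ^ 2 * V) ≤ N ^ 2 * Real.exp (N ^ (3 + 2 * N) * V) := by
      refine mul_le_mul_of_nonneg_left (Real.exp_le_exp.2 (mul_le_mul_of_nonneg_right ?_ hV0))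
        (sq_nonneg N)
      rw [← Real.rpow_natCast]
      exact Real.rpow_le_rpow_of_exponent_le hN1 (by push_cast; linarith)
    have main : ∀ s ∈ Icc (a 0) (a n), ∀ t ∈ Icc (a 0) (a n), ‖X t s‖ ≤ N ^ 2 * Real.exp (N ^ 2 * V) :=
      fun s hs t ht => hb (fun t => X t s) (hX s hs).1 (hX s hs).2.2 s hs (hX s hs).2.1 t ht
    exact ⟨(main s hs t ht).trans hle, (main t ht s hs).trans hle⟩
end
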